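/- Let r ∈ ℕ with r ≥ 2 or r = ∞, and let f be a volume-preserving C^r diffeomorphism of T², isotopic to the identity, regularly semi-conjugate to T_ω̄ with ω̄ totally irrational and super-Liouvillean; let G_f be the group of centralizers of f in Diff^{r−1}(T², Vol) ∩ Homeo_*(T²), and fix x₀ ∈ T² with dense f-orbit. Then both maps φ₁: G_f → ℝ²/ℤ², φ₁(g) = ρ(g), and φ₂: G_f → T², φ₂(g) = g(x₀), are injective; moreover φ₁ is an injective group homomorphism with dense image. -/

import Mathlib

open Filter Topology MeasureTheory

noncomputable section

/-- The plane ℝ². -/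
abbrev R2 : Type := ℝ × ℝ

/-- The Euclidean norm on ℝ². -/
def enorm2 (v : R2) : ℝ := Real.sqrt (v.1 ^ 2 + v.2 ^ 2)

/-- The two-torus 𝕋² = ℝ²/ℤ². -/
abbrev T2 : Type := AddCircle (1 : ℝ) × AddCircle (1 : ℝ)

/-- The covering projection π : ℝ² → 𝕋². -/
def pr2 (v : R2) : T2 := ((v.1 : AddCircle (1 : ℝ)), (v.2 : AddCircle (1 : ℝ)))

/-- The integer vector (v₁, v₂) regarded as a point of ℝ². -/
def intVec (v : ℤ × ℤ) : R2 := ((v.1 : ℝ), (v.2 : ℝ))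

/-- The distance on 𝕋² induced by the Euclidean metric on ℝ². -/
def distT2 (x y : T2) : ℝ :=
  sInf {r | ∃ a b : R2, pr2 a = x ∧ pr2 b = y ∧ r = enorm2 (a - b)}

/-- The C⁰ distance between two maps of 𝕋². -/
def dC0 (f g : T2 → T2) : ℝ := ⨆ x : T2, distT2 (f x) (g x)

/-- `F : ℝ² → ℝ²` is a lift of `f : 𝕋² → 𝕋²`, i.e. π ∘ F = f ∘ π. -/
def IsLift (F : R2 → R2) (f : T2 → T2) : Prop := ∀ z : R2, pr2 (F z) = f (pr2 z)

/-- `F` commutes with the deck transformations of π : ℝ² → 𝕋². -/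
def Equivariant (F : R2 → R2) : Prop :=
  ∀ (z : R2) (v : ℤ × ℤ), F (z + intVec v) = F z + intVec v

/-- `f` is a homeomorphism of 𝕋² isotopic to the identity (equivalently, admitting an
equivariant lift to ℝ²). -/
def IsotopicToId (f : T2 → T2) : Prop :=
  IsHomeomorph f ∧ ∃ F : R2 → R2, IsHomeomorph F ∧ IsLift F f ∧ Equivariant F

/-- The Misiurewicz–Ziemian rotation set of a lift `F`. -/
def rotSet (F : R2 → R2) : Set R2 :=
  {v | ∃ (z : ℕ → R2) (n : ℕ → ℕ), Tendsto n atTop atTop ∧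
      Tendsto (fun i => ((n i : ℝ))⁻¹ • (F^[n i] (z i) - z i)) atTop (𝓝 v)}

/-- Bounded mean motion, with bound κ, for a lift `F` with rotation vector `ω`:
‖Fⁿ(z) − z − nω‖ ≤ κ for all z and n. -/
def BoundedMeanMotion (F : R2 → R2) (ω : R2) (κ : ℝ) : Prop :=
  ∀ (z : R2) (n : ℕ), enorm2 (F^[n] z - z - (n : ℝ) • ω) ≤ κ

/-- The standard scalar product on ℝ². -/
def inner2 (u v : R2) : ℝ := u.1 * v.1 + u.2 * v.2

/-- v^⊥ = (−v₂, v₁)/‖v‖. -/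
def perp2 (v : R2) : R2 := (-v.2 / enorm2 v, v.1 / enorm2 v)

/-- Bounded deviation parallel to `v`, with bound κ, for a lift `F` with rotation vector `ω`:
|⟨Fⁿ(z) − z − nω, v^⊥⟩| ≤ κ for all z and n. -/
def BoundedDeviation (F : R2 → R2) (ω : R2) (v : R2) (κ : ℝ) : Prop :=
  ∀ (z : R2) (n : ℕ), |inner2 (F^[n] z - z - (n : ℝ) • ω) (perp2 v)| ≤ κ

/-- ‖ω‖_{𝕋²} = min over integer vectors z of ‖ω − z‖. -/
def normT2 (ω : R2) : ℝ := ⨅ v : ℤ × ℤ, enorm2 (ω - intVec v)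

/-- The super-Liouvillean condition: liminf_{n→∞} n⁻¹ ln ‖nω‖_{𝕋²} = −∞. -/
def SuperLiouville (ω : R2) : Prop :=
  ∀ M : ℝ, ∃ᶠ n : ℕ in atTop, (n : ℝ)⁻¹ * Real.log (normT2 ((n : ℝ) • ω)) < M

/-- The strong super-Liouvillean condition: liminf_{n→∞} n⁻¹ aⁿ ln ‖nω‖_{𝕋²} = −∞. -/
def StrongSuperLiouville (a : ℝ) (ω : R2) : Prop :=
  ∀ M : ℝ, ∃ᶠ n : ℕ in atTop, (n : ℝ)⁻¹ * a ^ n * Real.log (normT2 ((n : ℝ) • ω)) < M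

/-- ω ∈ ℝ² is irrational if ω ∉ ℚ². -/
def IrrationalVec (ω : R2) : Prop := ¬ ∃ q : ℚ × ℚ, ω = ((q.1 : ℝ), (q.2 : ℝ))

/-- ω is totally irrational if ω₁, ω₂, 1 are rationally independent. -/
def TotallyIrrationalVec (ω : R2) : Prop :=
  ∀ d1 d2 e : ℤ, (d1 : ℝ) * ω.1 + (d2 : ℝ) * ω.2 + (e : ℝ) = 0 → d1 = 0 ∧ d2 = 0 ∧ e = 0

/-- ω is semi-irrational: irrational but not totally irrational. -/
def SemiIrrationalVec (ω : R2) : Prop := IrrationalVec ω ∧ ¬ TotallyIrrationalVec ω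

/-- `v` is a character vector of the semi-irrational vector ω. -/
def IsCharacterVector (ω : R2) (v : R2) : Prop :=
  ∃ c d : ℤ, Int.gcd c d = 1 ∧ (∃ e : ℚ, (c : ℝ) * ω.1 + (d : ℝ) * ω.2 + (e : ℝ) = 0) ∧
    v = ((d : ℝ), (-c : ℝ))

/-- `f` is Hölder continuous with exponent `a`. -/
def HolderMap (a : ℝ) (f : T2 → T2) : Prop :=
  ∃ C : ℝ, ∀ x y : T2, distT2 (f x) (f y) ≤ C * distT2 x y ^ a

/-- C⁰-rigidity: liminf_{n→∞} d_{C⁰}(fⁿ, Id) = 0. -/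
def C0Rigid (f : T2 → T2) : Prop :=
  ∀ ε : ℝ, 0 < ε → ∃ᶠ n : ℕ in atTop, dC0 (f^[n]) id < ε

/-- `f` is a C^r diffeomorphism of 𝕋², expressed via a C^r lift with a C^r inverse. -/
def IsCrDiffeo (r : ℕ∞) (f : T2 → T2) : Prop :=
  ∃ F G : R2 → R2, IsLift F f ∧ Function.LeftInverse G F ∧ Function.RightInverse G F ∧
    ContDiff ℝ r F ∧ ContDiff ℝ r G

/-- C^k-rigidity: some sequence of iterates f^{n_j}, n_j → ∞, converges to the identity in the
C^k topology, i.e. admits lifts converging to the identity uniformly together with all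
derivatives of order ≤ k. -/
def CkRigid (k : ℕ∞) (f : T2 → T2) : Prop :=
  ∃ n : ℕ → ℕ, Tendsto n atTop atTop ∧
    ∃ F : ℕ → R2 → R2, (∀ j, IsLift (F j) (f^[n j])) ∧
      ∀ i : ℕ, (i : ℕ∞) ≤ k →
        Tendsto (fun j => ⨆ z : R2, ‖iteratedFDeriv ℝ i (fun w => F j w - w) z‖)
          atTop (𝓝 0)

/-- ‖x‖_𝕋 : the distance from x ∈ ℝ to the nearest integer. -/
def dT (x : ℝ) : ℝ := |x - round x|

/-- `q` is the sequence of denominators of the best rational approximations of β. -/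
def BestDenomSeq (β : ℝ) (q : ℕ → ℕ) : Prop :=
  q 0 = 1 ∧ ∀ n : ℕ,
    q n < q (n + 1) ∧
    (∀ m : ℕ, 1 ≤ m → m < q (n + 1) → dT ((q n : ℝ) * β) ≤ dT ((m : ℝ) * β)) ∧
    dT ((q n : ℝ) * β) < 1 / (q (n + 1) : ℝ)

/-- β is of non-Brjuno type: Σ_n (ln q_{n+1})/q_n = ∞. -/
def NonBrjunoNum (β : ℝ) : Prop :=
  ∀ q : ℕ → ℕ, BestDenomSeq β q → ¬ Summable fun n => Real.log (q (n + 1) : ℝ) / (q n : ℝ)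

/-- Character data of a semi-irrational vector ω: (c,d) ∈ ℤ² with gcd(c,d)=1 and
e = p/q ∈ ℚ in lowest terms with q > 0 such that c ω₁ + d ω₂ + p/q = 0. -/
def IsCharData (ω : R2) (c d p q : ℤ) : Prop :=
  Int.gcd c d = 1 ∧ Int.gcd p q = 1 ∧ 0 < q ∧
    (c : ℝ) * ω.1 + (d : ℝ) * ω.2 + (p : ℝ) / (q : ℝ) = 0

/-- ω is of strong non-Brjuno type: its character frequency 𝓕(ω̄) is of non-Brjuno type. -/
def StrongNonBrjuno (ω : R2) : Prop :=
  ∃ c d p q a b : ℤ, IsCharData ω c d p q ∧ a * d - b * c = 1 ∧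
    NonBrjunoNum (dT ((q : ℝ) * ((a : ℝ) * ω.1 + (b : ℝ) * ω.2)))

/-- The linear action of the integer matrix [[a,b],[c,d]] on ℝ². -/
def AactZ (a b c d : ℤ) (z : R2) : R2 :=
  ((a : ℝ) * z.1 + (b : ℝ) * z.2, (c : ℝ) * z.1 + (d : ℝ) * z.2)

/-- The operator norm (w.r.t. the Euclidean norm) of the matrix [[a,b],[c,d]]. -/
def AOpNormZ (a b c d : ℤ) : ℝ :=
  sSup {r | ∃ u : R2, enorm2 u ≤ 1 ∧
    r = enorm2 ((a : ℝ) * u.1 + (b : ℝ) * u.2, (c : ℝ) * u.1 + (d : ℝ) * u.2)}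

/-- Membership in the class 𝒞_{κ,ω̄}: pseudo-rotations with rotation vector ω̄ mod ℤ²
having bounded mean motion with bound κ. -/
def MemC (κ : ℝ) (w : T2) (f : T2 → T2) : Prop :=
  IsotopicToId f ∧ ∃ (F : R2 → R2) (ω : R2),
    IsLift F f ∧ rotSet F = {ω} ∧ pr2 ω = w ∧ BoundedMeanMotion F ω κ

/-- Membership in the class 𝒟_{κ,ω̄,v}: pseudo-rotations with rotation vector ω̄ mod ℤ²
having bounded deviation parallel to v with bound κ. -/
def MemD (κ : ℝ) (w : T2) (v : R2) (f : T2 → T2) : Prop :=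
  IsotopicToId f ∧ ∃ (F : R2 → R2) (ω : R2),
    IsLift F f ∧ rotSet F = {ω} ∧ pr2 ω = w ∧ BoundedDeviation F ω v κ

/-- `h : 𝕋² → 𝕋²` is homotopic to the identity (characterised by admitting an equivariant
continuous lift). -/
def HomotopicToIdMap (h : T2 → T2) : Prop :=
  ∃ H : R2 → R2, Continuous H ∧ IsLift H h ∧ Equivariant H

/-- `f` is regularly semi-conjugate to the translation T_w : x ↦ x + w, i.e. semi-conjugate via
a continuous surjection homotopic to the identity. -/
def RegSemiConj (f : T2 → T2) (w : T2) : Prop :=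
  ∃ h : T2 → T2, Continuous h ∧ Function.Surjective h ∧ HomotopicToIdMap h ∧
    ∀ x : T2, h (f x) = h x + w

/-- `f` is topologically conjugate to a translation of 𝕋². -/
def TopLinearizable (f : T2 → T2) : Prop :=
  ∃ (w : T2) (h : T2 → T2), IsHomeomorph h ∧ ∀ x : T2, h (f x) = h x + w

/-- `f` is minimal: every orbit is dense. -/
def MinimalMap (f : T2 → T2) : Prop :=
  ∀ x : T2, Dense (Set.range fun n : ℕ => f^[n] x)

/-- The open ball in 𝕋² for the Euclidean-induced distance. -/
def ballT2 (z : T2) (r : ℝ) : Set T2 := {y | distT2 z y < r}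

/-- The diameter of a subset of 𝕋² for the Euclidean-induced distance. -/
def diamT2 (S : Set T2) : ℝ := sSup {r | ∃ x ∈ S, ∃ y ∈ S, r = distT2 x y}

/-- The Euclidean diameter of a subset of ℝ². -/
def diamE (S : Set R2) : ℝ := sSup {r | ∃ x ∈ S, ∃ y ∈ S, r = enorm2 (x - y)}

/-- `F` is a bounded (measurable) fundamental domain for the ℤ²-action on ℝ². -/
def IsBoundedFundDom (F : Set R2) : Prop :=
  MeasurableSet F ∧ Bornology.IsBounded F ∧
    (∀ x : R2, ∃ v : ℤ × ℤ, x - intVec v ∈ F) ∧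
    ∀ v : ℤ × ℤ, v ≠ 0 → F ∩ ((fun x => x + intVec v) '' F) = ∅

/-- `D` is an open topological disc in 𝕋². -/
def IsTopDisc (D : Set T2) : Prop :=
  IsOpen D ∧ Nonempty (D ≃ₜ Metric.ball (0 : R2) 1)

/-- `D` is simple with respect to the fundamental domain `F`: some connected component of
π⁻¹(D) is contained in `F`. -/
def IsSimpleDisc (D : Set T2) (F : Set R2) : Prop :=
  ∃ x ∈ pr2 ⁻¹' D, connectedComponentIn (pr2 ⁻¹' D) x ⊆ F

/-- `u` is the rotation vector of `g`, defined as the mean displacement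
∫_{𝕋²} (g̃(x̃) − x̃) dλ(x) mod ℤ² of an equivariant lift `G` of `g`. -/
def IsRotOf (g : T2 → T2) (u : T2) : Prop :=
  ∃ (G : R2 → R2) (Φ : T2 → R2), Continuous G ∧ IsLift G g ∧ Equivariant G ∧
    (∀ z : R2, Φ (pr2 z) = G z - z) ∧ u = pr2 (∫ x : T2, Φ x)

/-- The set Γ = ((ℚ×ℝ)/ℤ²) ∪ ((ℝ×ℚ)/ℤ²) of points of 𝕋² with at least one rational
coordinate. -/
def GammaSet : Set T2 :=
  {x | (∃ q : ℚ, x.1 = ((q : ℝ) : AddCircle (1 : ℝ))) ∨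
       (∃ q : ℚ, x.2 = ((q : ℝ) : AddCircle (1 : ℝ)))}

/-!
A commuting `g` satisfies `h ∘ g = h + const`, and the constant is the rotation vector of `g`. So
everything reduces to this: a conservative `q` isotopic to the identity with `h ∘ q = h` is the
identity.

Lift `h`, `f`, `q` to `H`, `F`, `G` with `H ∘ F = H + ω` and `H ∘ G = H`, and let `L` be a Lipschitz
constant of `F`. For suitable `n` and `v` the map `P = Fⁿ - v` translates `H` by `ε = n ω - v`,
where `L²ⁿ ‖ε‖` is as small as desired. If `G ∘ P` displaced a point by more than a fixed `η`, then
a ball of radius comparable to `L⁻ⁿ` would be disjoint from its image. By Brouwer's lemma the orbit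
of a point of the torus visits such a ball a bounded number of times during the time `1 / ‖ε‖`, in
which its lift drifts by a bounded amount; by preservation of volume `L⁻²ⁿ ≲ ‖ε‖`, a contradiction.
Hence `G ∘ P`, and likewise `P`, is close to the identity, and so is `G`.
-/

/-! ### Logarithms of difference quotients -/

section ContinuousLog

theorem sub_eq_sub_of_exp_eq {X : Type*} [TopologicalSpace X] {S : Set X} (hS : IsPreconnected S)
    {a b : X → ℂ} (ha : ContinuousOn a S) (hb : ContinuousOn b S)
    (hab : ∀ x ∈ S, Complex.exp (a x) = Complex.exp (b x)) {x y : X} (hx : x ∈ S) (hy : y ∈ S) :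
    a x - b x = a y - b y := by
  have hexp : ∀ z ∈ S, Complex.exp (a z - b z) = 1 := fun z hz => by
    rw [Complex.exp_sub, hab z hz, div_self (Complex.exp_ne_zero _)]
  exact Complex.isCoveringMap_exp.constOn_of_comp hS (ha.sub hb)
    (fun z hz w hw => Subtype.ext ((hexp z hz).trans (hexp w hw).symm)) hx hy

theorem exists_continuous_exp_eq {X : Type*} [TopologicalSpace X] [SimplyConnectedSpace X]
    [LocallyPathConnectedSpace X] {g : X → ℂ} (hg : Continuous g) (h0 : ∀ x, g x ≠ 0) :
    ∃ l : X → ℂ, Continuous l ∧ ∀ x, Complex.exp (l x) = g x := by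
  obtain ⟨x₀⟩ : Nonempty X := inferInstance
  obtain ⟨l, ⟨-, hl⟩, -⟩ := Complex.isCoveringMapOn_exp.existsUnique_continuousMap_lifts
    (⟨g, hg⟩ : C(X, ℂ)) (a₀ := x₀) (Complex.exp_log (h0 x₀)) h0
  exact ⟨l, l.continuous, congrFun hl⟩

end ContinuousLog

section LogSlope

/-- `h : ℂ → ℂ` has a continuous logarithm `a x y` of its difference quotients
`(h y - h x) / (y - x)`, symmetric in `x ≠ y`. For homeomorphisms of the plane this is the
substitute used here for preserving orientation. -/
def HasLogSlope (h : ℂ → ℂ) : Prop :=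
  ∃ a : ℂ → ℂ → ℂ, ContinuousOn (Function.uncurry a) {p | p.1 ≠ p.2} ∧
    (∀ x y, x ≠ y → a y x = a x y) ∧
    ∀ x y, x ≠ y → h y - h x = Complex.exp (a x y) * (y - x)

theorem HasLogSlope.comp {h k : ℂ → ℂ} (hh : HasLogSlope h) (hk : HasLogSlope k)
    (hkc : Continuous k) (hki : Function.Injective k) : HasLogSlope (h ∘ k) := by
  obtain ⟨a, ha, ha_symm, ha_exp⟩ := hh
  obtain ⟨b, hb, hb_symm, hb_exp⟩ := hk
  refine ⟨fun x y => a (k x) (k y) + b x y, ?_, fun x y hxy => ?_, fun x y hxy => ?_⟩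
  · exact (ha.comp (hkc.prodMap hkc).continuousOn fun p hp => hki.ne hp).add hb
  · simp only [ha_symm _ _ (hki.ne hxy), hb_symm _ _ hxy]
  · rw [Function.comp_apply, Function.comp_apply, ha_exp _ _ (hki.ne hxy), hb_exp _ _ hxy,
      Complex.exp_add, mul_assoc]

theorem HasLogSlope.symm {h : ℂ ≃ₜ ℂ} (hh : HasLogSlope h) : HasLogSlope h.symm := by
  obtain ⟨a, ha, ha_symm, ha_exp⟩ := hh
  refine ⟨fun x y => -a (h.symm x) (h.symm y), ?_, fun x y hxy => ?_, fun x y hxy => ?_⟩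
  · exact (ha.comp (h.symm.continuous.prodMap h.symm.continuous).continuousOn
      fun p hp => h.symm.injective.ne hp).neg
  · simp only [ha_symm _ _ (h.symm.injective.ne hxy)]
  · have := ha_exp _ _ (h.symm.injective.ne hxy)
    rw [h.apply_symm_apply, h.apply_symm_apply] at this
    rw [this, Complex.exp_neg, inv_mul_cancel_left₀ (Complex.exp_ne_zero _)]

-- Along `z ↦ (z, h z)` the logarithm of the slope is `Θ ∘ h - Θ` up to a constant, where
-- `exp ∘ Θ = h - id`; on a 2-cycle it is symmetric while `Θ ∘ h - Θ` is antisymmetric.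
theorem HasLogSlope.apply_apply_ne {h : ℂ → ℂ} (hh : HasLogSlope h) (hc : Continuous h)
    (hfix : ∀ z, h z ≠ z) (x : ℂ) : h (h x) ≠ x := by
  intro hx
  obtain ⟨a, ha, ha_symm, ha_exp⟩ := hh
  obtain ⟨Θ, hΘ, hΘ_exp⟩ := exists_continuous_exp_eq (g := fun z => h z - z) (by fun_prop)
    fun z => sub_ne_zero.2 (hfix z)
  have hac : Continuous fun z => a z (h z) :=
    ha.comp_continuous (continuous_id.prodMk hc) fun z => (hfix z).symm
  have hcycle := sub_eq_sub_of_exp_eq isPreconnected_univ (a := fun z => Θ (h z))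
    (b := fun z => a z (h z) + Θ z) (hΘ.comp hc).continuousOn (hac.add hΘ).continuousOn
    (fun z _ => by rw [hΘ_exp, Complex.exp_add, hΘ_exp, ha_exp _ _ (hfix z).symm])
    (Set.mem_univ x) (Set.mem_univ (h x))
  simp only [hx, ha_symm _ _ (hfix x).symm] at hcycle
  have hΘ_eq : Θ (h x) = Θ x := by linear_combination hcycle / 2
  have hdiff := hΘ_exp (h x)
  rw [hΘ_eq, hΘ_exp, hx] at hdiff
  exact hfix x (by linear_combination hdiff / 2)

theorem exists_homeomorph_id_add_of_lipschitzWith {E : Type*} [NormedAddCommGroup E]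
    [NormedSpace ℝ E] [CompleteSpace E] {K : NNReal} (hK : K < 1) {u : E → E}
    (hu : LipschitzWith K u) : ∃ φ : E ≃ₜ E, ∀ x, φ x = x + u x := by
  have happrox : ApproximatesLinearOn (fun x => x + u x)
      (ContinuousLinearEquiv.refl ℝ E : E →L[ℝ] E) Set.univ K := fun x _ y _ => by
    simpa [add_sub_add_comm] using hu.norm_sub_le x y
  refine ⟨happrox.toHomeomorph _ ?_, fun x => rfl⟩
  cases subsingleton_or_nontrivial E
  · exact Or.inl ‹_›
  · exact Or.inr (by simpa using hK)

theorem HasLogSlope.id_add {K : NNReal} (hK : K < 1) {u : ℂ → ℂ} (hu : LipschitzWith K u) :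
    HasLogSlope fun x => x + u x := by
  have hmem : ∀ x y, x ≠ y → 1 + (u y - u x) / (y - x) ∈ Complex.slitPlane := fun x y hxy => by
    refine Complex.mem_slitPlane_of_norm_lt_one ?_
    have hpos : 0 < ‖y - x‖ := norm_sub_pos_iff.2 hxy.symm
    rw [norm_div, div_lt_one hpos]
    exact (hu.norm_sub_le y x).trans_lt (mul_lt_of_lt_one_left hpos hK)
  refine ⟨fun x y => Complex.log (1 + (u y - u x) / (y - x)), ?_, fun x y _ => ?_,
    fun x y hxy => ?_⟩
  · have := hu.continuous
    refine ContinuousOn.clog (continuousOn_const.add (ContinuousOn.div (by fun_prop)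
      (by fun_prop) fun p hp => sub_ne_zero.2 (Ne.symm hp))) fun p hp => hmem _ _ hp
  · beta_reduce
    rw [← neg_sub (u y), ← neg_sub y, neg_div_neg_eq]
  · rw [Complex.exp_log (Complex.slitPlane_ne_zero (hmem x y hxy)), add_mul,
      div_mul_cancel₀ _ (sub_ne_zero.2 hxy.symm)]
    ring

theorem lipschitzWith_tent (a v : ℂ) (ρ : ℝ) :
    LipschitzWith ‖v‖₊ fun x : ℂ => (max 0 (ρ - dist x a) : ℝ) • v := by
  refine LipschitzWith.of_dist_le_mul fun x y => ?_
  rw [dist_eq_norm, ← sub_smul, norm_smul, mul_comm, coe_nnnorm]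
  gcongr
  calc |max 0 (ρ - dist x a) - max 0 (ρ - dist y a)|
      ≤ |dist y a - dist x a| := by
        simpa [max_comm] using abs_max_sub_max_le_abs (ρ - dist x a) (ρ - dist y a) 0
    _ ≤ dist x y := by rw [dist_comm x y]; exact abs_dist_sub_le y x a

theorem eventually_exists_hasLogSlope_apply_eq {U : Set ℂ} (hU : IsOpen U) {a : ℂ} (ha : a ∈ U) :
    ∀ᶠ b in 𝓝 a, ∃ φ : ℂ ≃ₜ ℂ, HasLogSlope φ ∧ φ a = b ∧ ∀ x ∉ U, φ x = x := by
  obtain ⟨ρ, hρ, hball⟩ := Metric.isOpen_iff.1 hU a ha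
  filter_upwards [Metric.ball_mem_nhds a hρ] with b hb
  set v : ℂ := ρ⁻¹ • (b - a)
  have hv : ‖v‖₊ < 1 := by
    rw [← NNReal.coe_lt_coe, coe_nnnorm, norm_smul, norm_inv, Real.norm_of_nonneg hρ.le,
      ← dist_eq_norm, NNReal.coe_one]
    exact (inv_mul_lt_one₀ hρ).2 hb
  obtain ⟨φ, hφ⟩ := exists_homeomorph_id_add_of_lipschitzWith hv (lipschitzWith_tent a v ρ)
  refine ⟨φ, ?_, ?_, fun x hx => ?_⟩
  · rw [funext hφ]
    exact HasLogSlope.id_add hv (lipschitzWith_tent a v ρ)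
  · rw [hφ, dist_self, sub_zero, max_eq_right hρ.le, smul_inv_smul₀ hρ.ne', add_sub_cancel]
  · have hρx : ρ ≤ dist x a := not_lt.1 fun hlt => hx (hball hlt)
    rw [hφ, max_eq_left (sub_nonpos.2 hρx), zero_smul, add_zero]

theorem exists_hasLogSlope_apply_eq {U : Set ℂ} (hU : IsOpen U) (hUc : IsPreconnected U)
    {a b : ℂ} (ha : a ∈ U) (hb : b ∈ U) :
    ∃ φ : ℂ ≃ₜ ℂ, HasLogSlope φ ∧ φ a = b ∧ ∀ x ∉ U, φ x = x := by
  refine hUc.induction₂ (fun a b => ∃ φ : ℂ ≃ₜ ℂ, HasLogSlope φ ∧ φ a = b ∧ ∀ x ∉ U, φ x = x)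
    (fun x hx => nhdsWithin_le_nhds (eventually_exists_hasLogSlope_apply_eq hU hx)) ?_ ?_ ha hb
  · rintro x y z - - - ⟨φ, hφ, rfl, hφU⟩ ⟨ψ, hψ, rfl, hψU⟩
    exact ⟨φ.trans ψ, hψ.comp hφ φ.continuous φ.injective, rfl,
      fun t ht => by rw [Homeomorph.trans_apply, hφU t ht, hψU t ht]⟩
  · rintro x y - - ⟨φ, hφ, rfl, hφU⟩
    exact ⟨φ.symm, hφ.symm, φ.symm_apply_apply x,
      fun t ht => by rw [Homeomorph.symm_apply_eq, hφU t ht]⟩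

end LogSlope

/-! ### Brouwer's lemma on free sets -/

section FreeSets

/-- A set is free for `h` if it is disjoint from its image, as in Brouwer's theory of plane
homeomorphisms. -/
def IsFree {X : Type*} (h : X → X) (U : Set X) : Prop := ∀ ⦃x⦄, x ∈ U → h x ∉ U

variable {X : Type*} {U : Set X}

theorem IsFree.preimage {Y : Type*} {h : X → X} {h' : Y → Y} {e : Y → X}
    (he : Function.Semiconj e h' h) (hU : IsFree h U) : IsFree h' (e ⁻¹' U) :=
  fun y hy hhy => hU hy (he y ▸ hhy)

theorem apply_mem_of_forall_notMem_eq {φ : X → X} (hφ : Function.Injective φ)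
    (hφU : ∀ x ∉ U, φ x = x) {x : X} (hx : x ∈ U) : φ x ∈ U := by
  by_contra hmem
  exact hmem ((hφ (hφU _ hmem)).symm ▸ hx)

theorem iterate_comp_succ_apply_eq {h φ : X → X} (hφU : ∀ x ∉ U, φ x = x) {u : X} {m : ℕ}
    (hm : ∀ i, 1 ≤ i → i ≤ m → h^[i] u ∉ U) : (φ ∘ h)^[m + 1] u = φ (h^[m + 1] u) := by
  induction m with
  | zero => rfl
  | succ m ih =>
    rw [Function.iterate_succ_apply', ih fun i hi him => hm i hi (him.trans m.le_succ),
      hφU _ (hm _ (by omega) le_rfl), Function.comp_apply, ← Function.iterate_succ_apply' h]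

variable [TopologicalSpace X]

theorem IsFree.apply_notMem_of_mem_closure {h : X → X} (hU : IsOpen U) (hf : IsFree h U)
    (hc : Continuous h) {x : X} (hx : x ∈ closure U) : h x ∉ U := fun hhx => by
  obtain ⟨y, hhy, hy⟩ := mem_closure_iff.1 hx _ (hU.preimage hc) hhx
  exact hf hy hhy

theorem IsFree.apply_notMem_closure {h : X ≃ₜ X} (hU : IsOpen U) (hf : IsFree h U) {x : X}
    (hx : x ∈ U) : h x ∉ closure U := fun hhx => by
  obtain ⟨_, ⟨y, hy, rfl⟩, hhy⟩ := mem_closure_iff.1 hhx _ (h.isOpenMap _ hU) ⟨x, hx, rfl⟩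
  exact hf hy hhy

theorem IsFree.union_image {h : X ≃ₜ X} (hU : IsOpen U) (hf : IsFree h U)
    (hf2 : IsFree (h ∘ h) U) {z : X} (hz : z ∈ closure U) (hhz : h z ∈ closure U) (hne : h z ≠ z)
    {A A' : Set X} (hzA : h z ∈ A) (hA : A ⊆ insert (h z) U) (hA' : A' ⊆ insert z U)
    (hdisj : Disjoint A A') : IsFree h (A ∪ h '' A') := by
  have hcl : A ⊆ closure U := hA.trans (Set.insert_subset hhz subset_closure)
  have hcl' : A' ⊆ closure U := hA'.trans (Set.insert_subset hz subset_closure)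
  have hhhz : h (h z) ∉ A := fun hmem => (hA hmem).elim (fun heq => hne (h.injective heq))
    (hf2.apply_notMem_of_mem_closure hU (h.continuous.comp h.continuous) hz)
  rintro y (hy | ⟨q, hq, rfl⟩) (hmem | ⟨q', hq', heq⟩)
  · rcases hA hy with rfl | hyU
    exacts [hhhz hmem, hf.apply_notMem_closure hU hyU (hcl hmem)]
  · exact hdisj.le_bot ⟨hy, h.injective heq ▸ hq'⟩
  · rcases hA' hq with rfl | hqU
    exacts [hhhz hmem, IsFree.apply_notMem_closure (h := h.trans h) hU hf2 hqU (hcl hmem)]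
  · rw [h.injective heq] at hq'
    rcases hA' hq with rfl | hqU
    exacts [hdisj.le_bot ⟨hzA, hq'⟩, hf.apply_notMem_closure hU hqU (hcl' hq')]

theorem IsFree.exists_isOpen_superset [T2Space X] [LocallyConnectedSpace X] {h : X ≃ₜ X}
    {β : Set X} (hβ : IsCompact β) (hβp : IsPreconnected β) (hf : IsFree h β) :
    ∃ U, IsOpen U ∧ IsPreconnected U ∧ IsFree h U ∧ β ⊆ U := by
  rcases β.eq_empty_or_nonempty with rfl | ⟨u, hu⟩
  · exact ⟨∅, isOpen_empty, isPreconnected_empty, fun _ hx => hx.elim, subset_rfl⟩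
  have hdisj : Disjoint β (h '' β) :=
    Set.disjoint_right.2 <| Set.forall_mem_image.2 fun y hy => hf hy
  obtain ⟨V, V', hV, hV', hβV, hβV', hVV'⟩ :=
    SeparatedNhds.of_isCompact_isCompact hβ (hβ.image h.continuous) hdisj
  have hsub : β ⊆ V ∩ h ⁻¹' V' := fun y hy => ⟨hβV hy, hβV' ⟨y, hy, rfl⟩⟩
  refine ⟨connectedComponentIn (V ∩ h ⁻¹' V') u,
    (hV.inter (hV'.preimage h.continuous)).connectedComponentIn,
    isPreconnected_connectedComponentIn, fun y hy hhy => ?_,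
    hβp.subset_connectedComponentIn hu hsub⟩
  exact hVV'.le_bot
    ⟨(connectedComponentIn_subset _ _ hhy).1, (connectedComponentIn_subset _ _ hy).2⟩

end FreeSets

section FreeBalls

theorem exists_isFree_ball {X : Type*} [MetricSpace X] [ProperSpace X] {h : X → X}
    (hc : Continuous h) {x : X} (hx : h x ≠ x) :
    ∃ r > 0, IsFree h (Metric.ball x r) ∧
      ∃ z ∈ Metric.closedBall x r, h z ∈ Metric.closedBall x r := by
  have hcont : Continuous fun z => max (dist z x) (dist (h z) x) := by fun_prop
  have : Nonempty X := ⟨x⟩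
  obtain ⟨z, hz⟩ := hcont.exists_forall_le
    (tendsto_atTop_mono (fun z => le_max_left _ _) (tendsto_dist_right_cocompact_atTop x))
  refine ⟨max (dist z x) (dist (h z) x), ?_, fun y hy hhy => (hz y).not_gt (max_lt hy hhy),
    z, Metric.mem_closedBall.2 (le_max_left _ _), Metric.mem_closedBall.2 (le_max_right _ _)⟩
  rw [gt_iff_lt, lt_max_iff, dist_pos, dist_pos]
  by_contra! hzx
  exact hx (hzx.1 ▸ hzx.2)

variable {E : Type*} [NormedAddCommGroup E] [NormedSpace ℝ E]

theorem lineMap_image_Icc_subset {x w : E} {r s : ℝ} (hw : dist x w = r) (hr : 0 < r)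
    (hs : 0 ≤ s) : AffineMap.lineMap x w '' Set.Icc s 1 ⊆ insert w (Metric.ball x r) := by
  rintro _ ⟨t, ht, rfl⟩
  rcases ht.2.eq_or_lt with rfl | hlt
  · exact Or.inl (AffineMap.lineMap_apply_one x w)
  · refine Or.inr ?_
    rw [Metric.mem_ball, dist_lineMap_left, hw, Real.norm_of_nonneg (hs.trans ht.1)]
    exact mul_lt_of_lt_one_left hr hlt

theorem disjoint_lineMap_image_Icc {x w z : E} {r s : ℝ} (hw : dist x w = r) (hz : dist x z = r)
    (hr : 0 < r) (hs : 0 < s) (hne : w ≠ z) :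
    Disjoint ((AffineMap.lineMap x w : ℝ → E) '' Set.Icc 0 1)
      (AffineMap.lineMap x z '' Set.Icc s 1) := by
  rw [Set.disjoint_left]
  rintro _ ⟨t, ht, rfl⟩ ⟨t', ht', heq⟩
  have ht'0 : 0 < t' := hs.trans_le ht'.1
  have hdist := congrArg (dist · x) heq
  simp only [dist_lineMap_left, hw, hz, Real.norm_of_nonneg ht.1,
    Real.norm_of_nonneg ht'0.le] at hdist
  obtain rfl : t' = t := mul_right_cancel₀ hr.ne' hdist
  simp only [AffineMap.lineMap_apply_module', add_left_inj] at heq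
  exact hne (sub_left_injective (smul_right_injective E ht'0.ne' heq)).symm

-- The continuum is the radius from `x` to `h z` followed by the image of the outer part of the
-- radius from `x` to `z`.
theorem exists_isFree_continuum {h : E ≃ₜ E} {x : E} {r : ℝ} (hr : 0 < r)
    (hf : IsFree h (Metric.ball x r)) (hf2 : IsFree (h ∘ h) (Metric.ball x r)) {z : E}
    (hz : z ∈ Metric.closedBall x r) (hhz : h z ∈ Metric.closedBall x r) (hne : h z ≠ z)
    {s : ℝ} (hs0 : 0 < s) (hs1 : s ≤ 1) :
    ∃ β : Set E, IsCompact β ∧ IsPreconnected β ∧ IsFree h β ∧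
      (∀ y ∈ β, h y ∉ Metric.ball x r) ∧ x ∈ β ∧ h (AffineMap.lineMap x z s) ∈ β := by
  rw [← closure_ball x hr.ne'] at hz hhz
  have hB : IsOpen (Metric.ball x r) := Metric.isOpen_ball
  have hsphere : ∀ w ∈ closure (Metric.ball x r), w ∉ Metric.ball x r → dist x w = r := by
    intro w hw hw'
    rw [dist_comm]
    exact (Metric.closure_ball_subset_closedBall hw).antisymm (not_lt.1 hw')
  have hzr := hsphere z hz fun hmem => hf.apply_notMem_closure hB hmem hhz
  have hhzr := hsphere _ hhz (hf.apply_notMem_of_mem_closure hB h.continuous hz)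
  set A : Set E := AffineMap.lineMap x (h z) '' Set.Icc (0 : ℝ) 1
  set A' : Set E := AffineMap.lineMap x z '' Set.Icc s 1
  have hA : A ⊆ insert (h z) (Metric.ball x r) := lineMap_image_Icc_subset hhzr hr le_rfl
  have hA' : A' ⊆ insert z (Metric.ball x r) := lineMap_image_Icc_subset hzr hr hs0.le
  have hzA : h z ∈ A := ⟨1, by simp, AffineMap.lineMap_apply_one _ _⟩
  have hzA' : z ∈ A' := ⟨1, ⟨hs1, le_rfl⟩, AffineMap.lineMap_apply_one _ _⟩
  have hline : ∀ w : E, Continuous (AffineMap.lineMap x w : ℝ → E) := fun w =>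
    AffineMap.lineMap_continuous
  refine ⟨A ∪ h '' A', ?_, ?_, ?_, ?_, ?_, ?_⟩
  · exact (isCompact_Icc.image (hline _)).union ((isCompact_Icc.image (hline _)).image h.continuous)
  · exact (isPreconnected_Icc.image _ (hline _).continuousOn).union (h z) hzA ⟨z, hzA', rfl⟩
      ((isPreconnected_Icc.image _ (hline _).continuousOn).image _ h.continuous.continuousOn)
  · exact hf.union_image hB hf2 hz hhz hne hzA hA hA'
      (disjoint_lineMap_image_Icc hhzr hzr hr hs0 hne)
  · rintro _ (hy | ⟨q, hq, rfl⟩)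
    · exact hf.apply_notMem_of_mem_closure hB h.continuous
        (Set.insert_subset hhz subset_closure (hA hy))
    · exact hf2.apply_notMem_of_mem_closure hB (h.continuous.comp h.continuous)
        (Set.insert_subset hz subset_closure (hA' hq))
  · exact Or.inl ⟨0, by simp, AffineMap.lineMap_apply_zero _ _⟩
  · exact Or.inr ⟨_, ⟨s, ⟨le_rfl, hs1⟩, rfl⟩, rfl⟩

end FreeBalls

section Brouwer

/-- Brouwer homeomorphisms of the plane: fixed point free and orientation preserving, the latter
in the form of `HasLogSlope`. -/
structure IsBrouwer (h : ℂ ≃ₜ ℂ) : Prop where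
  hasLogSlope : HasLogSlope h
  apply_ne : ∀ z, h z ≠ z

theorem IsBrouwer.trans_of_isFree {h φ : ℂ ≃ₜ ℂ} (hh : IsBrouwer h) (hφ : HasLogSlope φ)
    {U : Set ℂ} (hU : IsFree h U) (hφU : ∀ x ∉ U, φ x = x) : IsBrouwer (h.trans φ) := by
  refine ⟨hφ.comp hh.hasLogSlope h.continuous h.injective, fun z hz => ?_⟩
  rw [Homeomorph.trans_apply] at hz
  by_cases hmem : h z ∈ U
  · have hφmem := apply_mem_of_forall_notMem_eq φ.injective hφU hmem
    exact hU (hz ▸ hφmem) hmem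
  · exact hh.apply_ne z (hφU _ hmem ▸ hz)

theorem IsBrouwer.exists_periodic_of_iterate_mem {h : ℂ ≃ₜ ℂ} (hh : IsBrouwer h) {U : Set ℂ}
    (hUo : IsOpen U) (hUc : IsPreconnected U) (hU : IsFree h U) {u : ℂ} (hu : u ∈ U) {j : ℕ}
    (hj1 : 1 ≤ j) (hj : h^[j] u ∈ U) :
    ∃ i, 1 ≤ i ∧ i ≤ j ∧ ∃ h' : ℂ ≃ₜ ℂ, IsBrouwer h' ∧ ∃ x, h'^[i] x = x := by
  classical
  have hreturn : ∃ i, h^[i + 1] u ∈ U := ⟨j - 1, by rwa [Nat.sub_add_cancel hj1]⟩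
  have hlt : ∀ i, 1 ≤ i → i ≤ Nat.find hreturn → h^[i] u ∉ U := fun i hi hi' => by
    have := Nat.find_min hreturn (m := i - 1) (by omega)
    rwa [Nat.sub_add_cancel hi] at this
  obtain ⟨φ, hφ, hφu, hφU⟩ := exists_hasLogSlope_apply_eq hUo hUc (Nat.find_spec hreturn) hu
  refine ⟨Nat.find hreturn + 1, by omega, ?_, h.trans φ, hh.trans_of_isFree hφ hU hφU, u, ?_⟩
  · have := Nat.find_min' hreturn (m := j - 1) (by rwa [Nat.sub_add_cancel hj1])
    omega
  · exact (iterate_comp_succ_apply_eq hφU hlt).trans hφu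

-- With `x` of period `k`, `ψ` closes the `k`-orbit of a point `p` of a maximal free ball around
-- `x`, which produces an orbit of length `k - 1` starting and ending in a free continuum.
theorem IsBrouwer.exists_return_of_periodic {h : ℂ ≃ₜ ℂ} (hh : IsBrouwer h) {k : ℕ} (hk : 3 ≤ k)
    {x : ℂ} (hx : h^[k] x = x)
    (hfree : ∀ U, IsOpen U → IsPreconnected U → IsFree h U → ∀ u ∈ U, ∀ j, 1 ≤ j → j < k →
      h^[j] u ∉ U) :
    ∃ h' : ℂ ≃ₜ ℂ, IsBrouwer h' ∧ ∃ U, IsOpen U ∧ IsPreconnected U ∧ IsFree h' U ∧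
      ∃ u ∈ U, h'^[k - 1] u ∈ U := by
  obtain ⟨r, hr, hB, z, hz, hhz⟩ := exists_isFree_ball h.continuous (hh.apply_ne x)
  have hBo : IsOpen (Metric.ball x r) := Metric.isOpen_ball
  have hBp : IsPreconnected (Metric.ball x r) := (convex_ball x r).isPreconnected
  have hnear : ∀ᶠ s : ℝ in 𝓝[>] 0, AffineMap.lineMap x z s ∈ Metric.ball x r ∧
      h^[k] (AffineMap.lineMap x z s) ∈ Metric.ball x r := by
    have hline : Tendsto (AffineMap.lineMap x z : ℝ → ℂ) (𝓝[>] 0) (𝓝 x) :=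
      (AffineMap.lineMap_continuous.tendsto' _ _ (AffineMap.lineMap_apply_zero x z)).mono_left
        nhdsWithin_le_nhds
    have hBx : Metric.ball x r ∈ 𝓝 x := Metric.ball_mem_nhds x hr
    exact (hline.eventually hBx).and
      (((h.continuous.iterate k).tendsto' x x hx).comp hline |>.eventually hBx)
  obtain ⟨s, ⟨hpB, hkpB⟩, hs0, hs1⟩ := (hnear.and (Ioc_mem_nhdsGT one_pos)).exists
  set p := AffineMap.lineMap x z s
  obtain ⟨β, hβc, hβp, hβf, hβB, hxβ, hpβ⟩ := exists_isFree_continuum hr hB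
    (fun y hy => hfree _ hBo hBp hB y hy 2 (by omega) (by omega)) hz hhz (hh.apply_ne z) hs0 hs1
  obtain ⟨ψ, hψ, hψp, hψB⟩ := exists_hasLogSlope_apply_eq hBo hBp hkpB (Metric.mem_ball_self hr)
  have hβf' : IsFree (h.trans ψ) β := fun y hy => by
    rw [Homeomorph.trans_apply, hψB _ (hβB y hy)]
    exact hβf hy
  obtain ⟨U, hUo, hUp, hUf, hβU⟩ := hβf'.exists_isOpen_superset hβc hβp
  refine ⟨h.trans ψ, hh.trans_of_isFree hψ hB hψB, U, hUo, hUp, hUf, h p, hβU hpβ, hβU ?_⟩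
  obtain ⟨m, rfl⟩ := Nat.exists_eq_add_of_le' hk
  have horbit : ∀ i, 1 ≤ i → i ≤ m + 1 → h^[i] (h p) ∉ Metric.ball x r := fun i hi him => by
    rw [← Function.iterate_succ_apply]
    exact hfree _ hBo hBp hB p hpB _ (by omega) (by omega)
  have hreturn : (h.trans ψ)^[m + 2] (h p) = x :=
    (iterate_comp_succ_apply_eq hψB horbit).trans hψp
  exact hreturn ▸ hxβ

theorem IsBrouwer.iterate_ne {k : ℕ} (hk : 1 ≤ k) {h : ℂ ≃ₜ ℂ} (hh : IsBrouwer h) (x : ℂ) :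
    h^[k] x ≠ x := by
  induction k using Nat.strong_induction_on generalizing h x with
  | _ k ih =>
    intro hx
    have hfree : ∀ h : ℂ ≃ₜ ℂ, IsBrouwer h → ∀ U, IsOpen U → IsPreconnected U → IsFree h U →
        ∀ u ∈ U, ∀ j, 1 ≤ j → j < k → h^[j] u ∉ U := by
      intro h hh U hUo hUp hU u hu j hj1 hjk hj
      obtain ⟨i, hi1, hij, h', hh', y, hy⟩ :=
        hh.exists_periodic_of_iterate_mem hUo hUp hU hu hj1 hj
      exact ih i (hij.trans_lt hjk) hi1 hh' y hy
    obtain rfl | rfl | hk3 : k = 1 ∨ k = 2 ∨ 3 ≤ k := by omega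
    · exact hh.apply_ne x hx
    · exact hh.hasLogSlope.apply_apply_ne h.continuous hh.apply_ne x hx
    · obtain ⟨h', hh', U, hUo, hUp, hUf, u, hu, hreturn⟩ :=
        hh.exists_return_of_periodic hk3 hx (hfree h hh)
      exact hfree h' hh' U hUo hUp hUf u hu (k - 1) (by omega) (by omega) hreturn

theorem IsBrouwer.iterate_notMem_of_isFree {h : ℂ ≃ₜ ℂ} (hh : IsBrouwer h) {U : Set ℂ}
    (hUo : IsOpen U) (hUp : IsPreconnected U) (hU : IsFree h U) {u : ℂ} (hu : u ∈ U) {j : ℕ}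
    (hj1 : 1 ≤ j) : h^[j] u ∉ U := fun hj => by
  obtain ⟨i, hi1, -, h', hh', x, hx⟩ := hh.exists_periodic_of_iterate_mem hUo hUp hU hu hj1 hj
  exact hh'.iterate_ne hi1 x hx

end Brouwer

/-! ### Homeomorphisms of bounded displacement -/

section BoundedDisplacement

theorem continuousOn_comp_log {X Y : Type*} [TopologicalSpace X] [TopologicalSpace Y]
    {l : X × ℂ → Y} (hl : Continuous l)
    (hper : ∀ x s s', Complex.exp s = Complex.exp s' → l (x, s) = l (x, s')) :
    ContinuousOn (fun p : X × ℂ => l (p.1, Complex.log p.2)) {p | p.2 ≠ 0} := by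
  rintro ⟨x₀, w₀⟩ (hw₀ : w₀ ≠ 0)
  have hbranch : ContinuousAt
      (fun p : X × ℂ => l (p.1, Complex.log (p.2 / w₀) + Complex.log w₀)) (x₀, w₀) := by
    refine ContinuousAt.comp (g := l) hl.continuousAt
      (continuousAt_fst.prodMk ((ContinuousAt.clog (by fun_prop) ?_).add continuousAt_const))
    simp [div_self hw₀]
  refine hbranch.continuousWithinAt.congr (fun p hp => hper _ _ _ ?_) (hper _ _ _ ?_)
  · rw [Complex.exp_add, Complex.exp_log hp, Complex.exp_log hw₀,
      Complex.exp_log (div_ne_zero hp hw₀), div_mul_cancel₀ _ hw₀]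
  · rw [div_self hw₀, Complex.log_one, zero_add]

/-- The difference quotient of `Q` between `x` and `x + exp s`, as a function on the simply
connected space of pairs `(x, s)`. -/
def polarSlope (Q : ℂ → ℂ) (p : ℂ × ℂ) : ℂ :=
  (Q (p.1 + Complex.exp p.2) - Q p.1) / Complex.exp p.2

variable {Q : ℂ → ℂ}

theorem polarSlope_ne_zero (hQ : Function.Injective Q) (p : ℂ × ℂ) : polarSlope Q p ≠ 0 :=
  div_ne_zero (sub_ne_zero.2 (hQ.ne (by simp))) (Complex.exp_ne_zero _)

theorem continuous_polarSlope (hQ : Continuous Q) : Continuous (polarSlope Q) :=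
  Continuous.div (by fun_prop) (by fun_prop) fun p => Complex.exp_ne_zero _

theorem polarSlope_add_two_pi_mul_I (x s : ℂ) :
    polarSlope Q (x, s + 2 * Real.pi * Complex.I) = polarSlope Q (x, s) := by
  simp only [polarSlope, Complex.exp_periodic s]

theorem polarSlope_antipodal (x s : ℂ) :
    polarSlope Q (x + Complex.exp s, s + Real.pi * Complex.I) = polarSlope Q (x, s) := by
  simp only [polarSlope, Complex.exp_antiperiodic s]
  rw [add_neg_cancel_right, ← neg_sub, neg_div_neg_eq]

theorem polarSlope_mem_slitPlane {K : ℝ} (hK : ∀ z, ‖Q z - z‖ ≤ K) {p : ℂ × ℂ}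
    (hp : 2 * K < p.2.re) : polarSlope Q p ∈ Complex.slitPlane := by
  set v := Complex.exp p.2 with hv_def
  have hslope : polarSlope Q p = 1 + ((Q (p.1 + v) - (p.1 + v)) - (Q p.1 - p.1)) / v := by
    have hv : v ≠ 0 := Complex.exp_ne_zero p.2
    rw [polarSlope, ← hv_def]
    field_simp
    ring
  rw [hslope]
  refine Complex.mem_slitPlane_of_norm_lt_one ?_
  rw [norm_div, div_lt_one (norm_pos_iff.2 (Complex.exp_ne_zero _))]
  calc ‖(Q (p.1 + v) - (p.1 + v)) - (Q p.1 - p.1)‖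
      ≤ ‖Q (p.1 + v) - (p.1 + v)‖ + ‖Q p.1 - p.1‖ := norm_sub_le _ _
    _ ≤ 2 * K := by linarith [hK (p.1 + v), hK p.1]
    _ < Real.exp p.2.re := by linarith [Real.add_one_le_exp p.2.re]
    _ = ‖v‖ := (Complex.norm_exp _).symm

variable {l : ℂ × ℂ → ℂ}

-- The jump of `l` under `s ↦ s + 2πi` is constant, and it vanishes for large `Re s`, where `l`
-- differs by a constant from the principal branch.
theorem log_polarSlope_eq_of_exp_eq (hl : Continuous l)
    (hl_exp : ∀ p, Complex.exp (l p) = polarSlope Q p) (hQ : Continuous Q) {K : ℝ}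
    (hK : ∀ z, ‖Q z - z‖ ≤ K) (x : ℂ) {s s' : ℂ}
    (hs : Complex.exp s = Complex.exp s') : l (x, s) = l (x, s') := by
  set S : Set (ℂ × ℂ) := {p | 2 * K < p.2.re}
  have hS : IsPreconnected S :=
    (convex_halfSpace_gt (f := fun p : ℂ × ℂ => p.2.re)
      ⟨fun _ _ => rfl, fun _ _ => by simp⟩ _).isPreconnected
  have hslit : ∀ p ∈ S, polarSlope Q p ∈ Complex.slitPlane := fun p => polarSlope_mem_slitPlane hK
  have hper : Function.Periodic (fun s => l (x, s)) (2 * Real.pi * Complex.I) := by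
    intro s
    set s₀ : ℂ := ((2 * K + 1 : ℝ) : ℂ)
    have hjump := sub_eq_sub_of_exp_eq isPreconnected_univ
      (a := fun p : ℂ × ℂ => l (p.1, p.2 + 2 * Real.pi * Complex.I)) (b := l)
      (Continuous.continuousOn (by fun_prop)) hl.continuousOn
      (fun p _ => by rw [hl_exp, hl_exp, polarSlope_add_two_pi_mul_I])
      (Set.mem_univ (x, s)) (Set.mem_univ (x, s₀))
    have hprincipal := sub_eq_sub_of_exp_eq hS (b := fun p => Complex.log (polarSlope Q p))
      hl.continuousOn ((continuous_polarSlope hQ).continuousOn.clog hslit)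
      (fun p hp => by rw [hl_exp, Complex.exp_log (Complex.slitPlane_ne_zero (hslit p hp))])
      (x := (x, s₀ + 2 * Real.pi * Complex.I)) (y := (x, s₀)) (by simp [S, s₀]) (by simp [S, s₀])
    rw [polarSlope_add_two_pi_mul_I] at hprincipal
    linear_combination hjump + hprincipal
  obtain ⟨n, rfl⟩ := Complex.exp_eq_exp_iff_exists_int.1 hs
  exact hper.int_mul n s'

theorem log_polarSlope_antipodal (hl : Continuous l)
    (hl_exp : ∀ p, Complex.exp (l p) = polarSlope Q p) (hQ : Continuous Q) {K : ℝ}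
    (hK : ∀ z, ‖Q z - z‖ ≤ K) (x s : ℂ) :
    l (x + Complex.exp s, s + Real.pi * Complex.I) = l (x, s) := by
  have hjump := sub_eq_sub_of_exp_eq isPreconnected_univ
    (a := fun p : ℂ × ℂ => l (p.1 + Complex.exp p.2, p.2 + Real.pi * Complex.I)) (b := l)
    (Continuous.continuousOn (by fun_prop)) hl.continuousOn
    (fun p _ => by rw [hl_exp, hl_exp, polarSlope_antipodal])
    (Set.mem_univ (x, s)) (Set.mem_univ (x + Complex.exp s, s + Real.pi * Complex.I))
  have hper := log_polarSlope_eq_of_exp_eq hl hl_exp hQ hK x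
    (s := s + Real.pi * Complex.I + Real.pi * Complex.I) (s' := s)
    (by rw [Complex.exp_antiperiodic, Complex.exp_antiperiodic, neg_neg])
  simp only [Complex.exp_antiperiodic s, add_neg_cancel_right, hper] at hjump
  linear_combination hjump / 2

theorem hasLogSlope_of_norm_sub_le (hQ : Continuous Q) (hi : Function.Injective Q) {K : ℝ}
    (hK : ∀ z, ‖Q z - z‖ ≤ K) : HasLogSlope Q := by
  obtain ⟨l, hl, hl_exp⟩ :=
    exists_continuous_exp_eq (continuous_polarSlope hQ) (polarSlope_ne_zero hi)
  refine ⟨fun x y => l (x, Complex.log (y - x)), ?_, fun x y hxy => ?_, fun x y hxy => ?_⟩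
  · exact (continuousOn_comp_log hl
      fun x s s' => log_polarSlope_eq_of_exp_eq hl hl_exp hQ hK x).comp
      (f := fun p : ℂ × ℂ => (p.1, p.2 - p.1)) (by fun_prop) fun p hp => sub_ne_zero.2 (Ne.symm hp)
  · have hyx : y - x ≠ 0 := sub_ne_zero.2 hxy.symm
    beta_reduce
    rw [← log_polarSlope_antipodal hl hl_exp hQ hK x (Complex.log (y - x)), Complex.exp_log hyx,
      add_sub_cancel]
    refine log_polarSlope_eq_of_exp_eq hl hl_exp hQ hK y ?_
    rw [Complex.exp_log (sub_ne_zero.2 hxy), Complex.exp_antiperiodic, Complex.exp_log hyx, neg_sub]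
  · have hyx : y - x ≠ 0 := sub_ne_zero.2 hxy.symm
    rw [hl_exp, polarSlope, Complex.exp_log hyx, add_sub_cancel, div_mul_cancel₀ _ hyx]

theorem iterate_notMem_of_isFree_of_norm_sub_le {P : R2 ≃ₜ R2} {K : ℝ} (hK : ∀ z, ‖P z - z‖ ≤ K)
    (hP : ∀ z, P z ≠ z) {U : Set R2} (hUo : IsOpen U) (hUp : IsPreconnected U) (hU : IsFree P U)
    {u : R2} (hu : u ∈ U) {j : ℕ} (hj1 : 1 ≤ j) : P^[j] u ∉ U := by
  let e : ℂ ≃L[ℝ] R2 := Complex.equivRealProdCLM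
  let h : ℂ ≃ₜ ℂ := e.toHomeomorph.trans (P.trans e.symm.toHomeomorph)
  have hsemiconj : Function.Semiconj e h P := fun z => e.apply_symm_apply _
  have hbrouwer : IsBrouwer h := by
    refine ⟨hasLogSlope_of_norm_sub_le h.continuous h.injective
      (K := ‖(e.symm : R2 →L[ℝ] ℂ)‖ * K) fun z => ?_, fun z hz => hP (e z) ?_⟩
    · calc ‖h z - z‖ = ‖(e.symm : R2 →L[ℝ] ℂ) (P (e z) - e z)‖ := by
            rw [map_sub]
            simp [h]
        _ ≤ ‖(e.symm : R2 →L[ℝ] ℂ)‖ * K := ContinuousLinearMap.le_opNorm_of_le _ (hK _)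
    · rw [← hsemiconj z, hz]
  have hpre : IsPreconnected (e ⁻¹' U) := e.toHomeomorph.isPreconnected_preimage.2 hUp
  have := hbrouwer.iterate_notMem_of_isFree (hUo.preimage e.continuous) hpre
    (hU.preimage hsemiconj) (u := e.symm u) (by simpa using hu) hj1
  rwa [Set.mem_preimage, hsemiconj.iterate_right j, e.apply_symm_apply] at this

end BoundedDisplacement

/-! ### The torus and equivariant planar maps -/

section Torus

theorem continuous_pr2 : Continuous pr2 := by
  unfold pr2
  fun_prop

theorem isOpenMap_pr2 : IsOpenMap pr2 :=
  .prodMap QuotientAddGroup.isOpenMap_coe QuotientAddGroup.isOpenMap_coe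

theorem surjective_pr2 : Function.Surjective pr2 :=
  QuotientAddGroup.mk_surjective.prodMap QuotientAddGroup.mk_surjective

theorem isQuotientMap_pr2 : IsQuotientMap pr2 :=
  isOpenMap_pr2.isQuotientMap continuous_pr2 surjective_pr2

theorem uniformContinuous_pr2 : UniformContinuous pr2 := by
  have hcoe : UniformContinuous ((↑) : ℝ → AddCircle (1 : ℝ)) :=
    uniformContinuous_addMonoidHom_of_continuous
      (f := QuotientAddGroup.mk' (AddSubgroup.zmultiples (1 : ℝ))) continuous_quotient_mk'
  exact hcoe.prodMap hcoe

theorem pr2_add (a b : R2) : pr2 (a + b) = pr2 a + pr2 b := rfl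

theorem pr2_sub (a b : R2) : pr2 (a - b) = pr2 a - pr2 b := rfl

theorem pr2_eq_zero_iff {a : R2} : pr2 a = 0 ↔ ∃ v, intVec v = a := by
  simp only [Prod.ext_iff, Prod.exists, pr2, intVec, Prod.fst_zero, Prod.snd_zero,
    AddCircle.coe_eq_zero_iff, zsmul_one, exists_and_left, exists_and_right]

theorem pr2_intVec (v : ℤ × ℤ) : pr2 (intVec v) = 0 := pr2_eq_zero_iff.2 ⟨v, rfl⟩

theorem pr2_eq_pr2_iff {a b : R2} : pr2 a = pr2 b ↔ ∃ v, a = b + intVec v := by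
  rw [← sub_eq_zero, ← pr2_sub, pr2_eq_zero_iff]
  simp only [eq_sub_iff_add_eq', eq_comm]

theorem exists_pr2_eq_norm_sub_le (x : T2) (a : R2) : ∃ z, pr2 z = x ∧ ‖z - a‖ ≤ 1 := by
  obtain ⟨y, rfl⟩ := surjective_pr2 x
  have hfract : ∀ t : ℝ, |t - ⌊t⌋| ≤ 1 := fun t => by
    rw [Int.self_sub_floor, abs_of_nonneg (Int.fract_nonneg t)]
    exact (Int.fract_lt_one t).le
  refine ⟨y - intVec (⌊y.1 - a.1⌋, ⌊y.2 - a.2⌋), by rw [pr2_sub, pr2_intVec, sub_zero], ?_⟩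
  rw [sub_right_comm]
  exact max_le (hfract _) (hfract _)

instance infinite_T2 : Infinite T2 := by
  have : Infinite (AddCircle (1 : ℝ)) := (AddCircle.equivIco 1 0).infinite_iff.2
    (Set.infinite_coe_iff.2 (Set.Ico_infinite (lt_add_one 0)))
  infer_instance

theorem apply_eq_apply_of_pr2_comp_eq {X : Type*} [TopologicalSpace X] [PreconnectedSpace X]
    {k : X → R2} (hk : Continuous k) {c : T2} (h : ∀ z, pr2 (k z) = c) (z z' : X) :
    k z = k z' := by
  have hpr : ∀ z z', pr2 (k z) = pr2 (k z') := fun z z' => (h z).trans (h z').symm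
  exact Prod.ext
    ((AddCircle.isCoveringMap_coe 1).const_of_comp (continuous_fst.comp hk)
      (fun z z' => congrArg Prod.fst (hpr z z')) z z')
    ((AddCircle.isCoveringMap_coe 1).const_of_comp (continuous_snd.comp hk)
      (fun z z' => congrArg Prod.snd (hpr z z')) z z')

theorem exists_continuous_comp_pr2_eq {E : Type*} [TopologicalSpace E] {k : R2 → E}
    (hk : Continuous k) (hp : ∀ z v, k (z + intVec v) = k z) :
    ∃ Φ : C(T2, E), ∀ z, Φ (pr2 z) = k z := by
  have hfactor : ∀ a b, pr2 a = pr2 b → k a = k b := fun a b hab => by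
    obtain ⟨v, rfl⟩ := pr2_eq_pr2_iff.1 hab
    exact hp b v
  exact ⟨isQuotientMap_pr2.lift (f := ⟨pr2, continuous_pr2⟩) ⟨k, hk⟩ hfactor, fun z =>
    ContinuousMap.congr_fun
      (isQuotientMap_pr2.lift_comp (f := ⟨pr2, continuous_pr2⟩) ⟨k, hk⟩ hfactor) z⟩

theorem exists_norm_le_of_periodic {E : Type*} [SeminormedAddCommGroup E] {k : R2 → E}
    (hk : Continuous k) (hp : ∀ z v, k (z + intVec v) = k z) : ∃ K, ∀ z, ‖k z‖ ≤ K := by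
  obtain ⟨Φ, hΦ⟩ := exists_continuous_comp_pr2_eq hk hp
  obtain ⟨K, hK⟩ := isCompact_univ.exists_bound_of_continuousOn Φ.continuous.continuousOn
  exact ⟨K, fun z => hΦ z ▸ hK _ trivial⟩

namespace IsLift

variable {F G : R2 → R2} {f g : T2 → T2}

theorem comp (hF : IsLift F f) (hG : IsLift G g) : IsLift (F ∘ G) (f ∘ g) := fun z => by
  rw [Function.comp_apply, Function.comp_apply, hF, hG]

theorem iterate (hF : IsLift F f) (n : ℕ) : IsLift F^[n] f^[n] :=
  Function.Semiconj.iterate_right hF n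

theorem continuous (hF : IsLift F f) (hc : Continuous F) : Continuous f :=
  isQuotientMap_pr2.continuous_iff.2 ((continuous_pr2.comp hc).congr hF)

end IsLift

namespace Equivariant

variable {F G : R2 → R2}

theorem comp (hF : Equivariant F) (hG : Equivariant G) : Equivariant (F ∘ G) :=
  fun z v => (congrArg F (hG z v)).trans (hF (G z) v)

theorem iterate (hF : Equivariant F) (n : ℕ) : Equivariant F^[n] := fun z v =>
  (Function.Semiconj.iterate_right (f := (· + intVec v)) (fun z => (hF z v).symm) n z).symm

theorem symm {Q : R2 ≃ₜ R2} (hQ : Equivariant Q) : Equivariant Q.symm := fun z v => by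
  rw [Homeomorph.symm_apply_eq, hQ, Q.apply_symm_apply]

theorem sub_self_periodic (hF : Equivariant F) (z : R2) (v : ℤ × ℤ) :
    F (z + intVec v) - (z + intVec v) = F z - z := by
  rw [hF, add_sub_add_right_eq_sub]

theorem exists_displacement (hF : Equivariant F) (hc : Continuous F) :
    ∃ Φ : C(T2, R2), ∀ z, Φ (pr2 z) = F z - z :=
  exists_continuous_comp_pr2_eq (hc.sub continuous_id) hF.sub_self_periodic

theorem exists_norm_sub_le (hF : Equivariant F) (hc : Continuous F) : ∃ K, ∀ z, ‖F z - z‖ ≤ K :=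
  exists_norm_le_of_periodic (hc.sub continuous_id) hF.sub_self_periodic

theorem uniformContinuous (hF : Equivariant F) (hc : Continuous F) : UniformContinuous F := by
  obtain ⟨Φ, hΦ⟩ := hF.exists_displacement hc
  have hdisp : UniformContinuous fun z => Φ (pr2 z) :=
    (CompactSpace.uniformContinuous_of_continuous Φ.continuous).comp uniformContinuous_pr2
  simpa only [hΦ, id, sub_add_cancel] using hdisp.add uniformContinuous_id

theorem exists_lipschitzWith (hF : Equivariant F) (hd : ContDiff ℝ 1 F) :
    ∃ L, LipschitzWith L F := by
  obtain ⟨K, hK⟩ := exists_norm_le_of_periodic (hd.continuous_fderiv one_ne_zero) fun z v => by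
    rw [← fderiv_comp_add_right, funext fun x => hF x v, fderiv_add_const]
  exact ⟨K.toNNReal, lipschitzWith_of_nnnorm_fderiv_le (hd.differentiable one_ne_zero)
    fun z => NNReal.le_toNNReal_of_coe_le (hK z)⟩

end Equivariant

theorem IsCrDiffeo.of_le {r s : ℕ∞} {f : T2 → T2} (hf : IsCrDiffeo r f) (hs : s ≤ r) :
    IsCrDiffeo s f := by
  obtain ⟨F, G, hF, hGF, hFG, hFr, hGr⟩ := hf
  have hs' : (s : WithTop ℕ∞) ≤ r := mod_cast hs
  exact ⟨F, G, hF, hGF, hFG, hFr.of_le hs', hGr.of_le hs'⟩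

theorem IsCrDiffeo.iterate {r : ℕ∞} {f : T2 → T2} (hf : IsCrDiffeo r f) (n : ℕ) :
    IsCrDiffeo r f^[n] := by
  obtain ⟨F, G, hF, hGF, hFG, hFr, hGr⟩ := hf
  have hiter : ∀ {φ : R2 → R2}, ContDiff ℝ r φ → ContDiff ℝ r φ^[n] := fun {φ} hφ => by
    induction n with
    | zero => exact contDiff_id
    | succ n ih => exact ih.comp hφ
  exact ⟨F^[n], G^[n], hF.iterate n, hGF.iterate n, hFG.iterate n, hiter hFr, hiter hGr⟩

theorem IsCrDiffeo.exists_lipschitzWith {f : T2 → T2} (hf : IsCrDiffeo 1 f) {F : R2 → R2}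
    (hc : Continuous F) (hF : IsLift F f) (hFe : Equivariant F) : ∃ L, LipschitzWith L F := by
  obtain ⟨F', -, hF', -, -, hF'd, -⟩ := hf
  have hconst := apply_eq_apply_of_pr2_comp_eq (k := fun z => F z - F' z) (c := 0)
    (hc.sub hF'd.continuous) fun z => by rw [pr2_sub, hF, hF', sub_self]
  refine hFe.exists_lipschitzWith ?_
  rw [show F = fun z => F' z + (F 0 - F' 0) from
    funext fun z => by rw [← hconst z 0, add_sub_cancel]]
  exact (mod_cast hF'd : ContDiff ℝ 1 F').add contDiff_const

theorem IsotopicToId.iterate {f : T2 → T2} (hf : IsotopicToId f) (n : ℕ) :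
    IsotopicToId f^[n] := by
  obtain ⟨hfh, F, hFh, hF, hFe⟩ := hf
  have hiter : ∀ {X : Type} [TopologicalSpace X] {φ : X → X}, IsHomeomorph φ →
      IsHomeomorph φ^[n] := fun {X _ φ} hφ => by
    induction n with
    | zero => exact .id
    | succ n ih => exact ih.comp hφ
  exact ⟨hiter hfh, F^[n], hiter hFh, hF.iterate n, hFe.iterate n⟩

theorem IsotopicToId.comp {f g : T2 → T2} (hf : IsotopicToId f) (hg : IsotopicToId g) :
    IsotopicToId (f ∘ g) := by
  obtain ⟨hfh, F, hFh, hF, hFe⟩ := hf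
  obtain ⟨hgh, G, hGh, hG, hGe⟩ := hg
  exact ⟨hfh.comp hgh, F ∘ G, hFh.comp hGh, hF.comp hG, hFe.comp hGe⟩

theorem IsotopicToId.symm {f : T2 ≃ₜ T2} (hf : IsotopicToId f) : IsotopicToId f.symm := by
  obtain ⟨-, F, hFh, hF, hFe⟩ := hf
  refine ⟨f.symm.isHomeomorph, (hFh.homeomorph F).symm, (hFh.homeomorph F).symm.isHomeomorph,
    fun z => ?_, Equivariant.symm (Q := hFh.homeomorph F) hFe⟩
  rw [← Homeomorph.symm_apply_eq, Homeomorph.symm_symm, ← hF]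
  exact congrArg pr2 ((hFh.homeomorph F).apply_symm_apply z)

end Torus

/-! ### Maps semi-conjugate to translations -/

section Semiconj

theorem homeomorph_coe_pow {X : Type*} [TopologicalSpace X] (Q : X ≃ₜ X) (n : ℕ) :
    ⇑(Q ^ n) = Q^[n] :=
  hom_coe_pow _ rfl (fun _ _ => rfl) Q n

theorem semiconj_iterate_add {X A : Type*} [AddMonoid A] {f : X → X} {h : X → A} {w : A}
    (hf : Function.Semiconj h f (· + w)) (n : ℕ) : Function.Semiconj h f^[n] (· + n • w) := by
  rw [← add_right_iterate]
  exact hf.iterate_right n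

section DenseOrbit

variable {X A : Type*} [TopologicalSpace X] [TopologicalSpace A] {f g g' : X → X} {x₀ : X}

theorem eq_of_commute_of_apply_eq [T2Space X] (hx₀ : DenseRange fun n : ℕ => f^[n] x₀)
    (hg : Continuous g) (hg' : Continuous g') (hgf : Function.Commute g f)
    (hgf' : Function.Commute g' f) (h : g x₀ = g' x₀) : g = g' :=
  hx₀.equalizer hg hg' <| funext fun n => by
    simp only [Function.comp_apply, (hgf.iterate_right n).eq, (hgf'.iterate_right n).eq, h]

variable {h : X → A} {w : A}

theorem semiconj_add_of_commute [AddCommGroup A] [ContinuousAdd A] [T2Space A]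
    (hx₀ : DenseRange fun n : ℕ => f^[n] x₀) (hg : Continuous g) (hh : Continuous h)
    (hgf : Function.Commute g f) (hf : Function.Semiconj h f (· + w)) :
    Function.Semiconj h g (· + (h (g x₀) - h x₀)) :=
  congrFun <| hx₀.equalizer (hh.comp hg) (hh.add continuous_const) <| funext fun n => by
    simp only [Function.comp_apply, (hgf.iterate_right n).eq, (semiconj_iterate_add hf n).eq]
    abel

theorem denseRange_nsmul_of_semiconj [AddCommGroup A] [IsTopologicalAddGroup A]
    (hx₀ : DenseRange fun n : ℕ => f^[n] x₀) (hh : Continuous h) (hhs : Function.Surjective h)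
    (hf : Function.Semiconj h f (· + w)) : DenseRange fun n : ℕ => n • w := by
  have := (Homeomorph.addLeft (-h x₀)).surjective.denseRange.comp (hhs.denseRange.comp hx₀ hh)
    (Homeomorph.addLeft (-h x₀)).continuous
  simpa [Function.comp_def, (semiconj_iterate_add hf _).eq] using this

end DenseOrbit

theorem nsmul_ne_zero_of_denseRange {A : Type*} [TopologicalSpace A] [T1Space A] [AddMonoid A]
    [Infinite A] {w : A} (hw : DenseRange fun n : ℕ => n • w) {n : ℕ} (hn : n ≠ 0) : n • w ≠ 0 := by
  intro hzero
  have hfin : (Set.range fun n : ℕ => n • w).Finite :=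
    (isOfFinAddOrder_iff_nsmul_eq_zero.2 ⟨n, Nat.pos_of_ne_zero hn, hzero⟩).finite_multiples
  exact Set.infinite_univ (hw.closure_eq ▸ hfin.isClosed.closure_eq.symm ▸ hfin)

/-- `Q` is an equivariant lift of the torus map `q`, and `H` semi-conjugates it to the translation
of the plane by `ε`. The lift is a bundled homeomorphism so that lifts can be multiplied and
raised to powers in the group `R2 ≃ₜ R2`. -/
structure IsTranslationLift (H : R2 → R2) (q : T2 → T2) (ε : R2) (Q : R2 ≃ₜ R2) : Prop where
  isLift : IsLift Q q
  equivariant : Equivariant Q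
  semiconj : Function.Semiconj H Q (· + ε)

namespace IsTranslationLift

variable {H : R2 → R2} {q q' : T2 → T2} {ε ε' : R2} {Q Q' : R2 ≃ₜ R2}

theorem mul (hQ : IsTranslationLift H q ε Q) (hQ' : IsTranslationLift H q' ε' Q') :
    IsTranslationLift H (q ∘ q') (ε' + ε) (Q * Q') where
  isLift := hQ.isLift.comp hQ'.isLift
  equivariant := hQ.equivariant.comp hQ'.equivariant
  semiconj z := by
    rw [Homeomorph.mul_apply, hQ.semiconj.eq, hQ'.semiconj.eq, add_assoc]

theorem pow (hQ : IsTranslationLift H q ε Q) (n : ℕ) :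
    IsTranslationLift H q^[n] (n • ε) (Q ^ n) := by
  constructor <;> rw [homeomorph_coe_pow]
  exacts [hQ.isLift.iterate n, hQ.equivariant.iterate n, semiconj_iterate_add hQ.semiconj n]

theorem sub_intVec (hQ : IsTranslationLift H q ε Q) (hH : Equivariant H) (v : ℤ × ℤ) :
    IsTranslationLift H q (ε - intVec v) (Homeomorph.subRight (intVec v) * Q) where
  isLift z := by
    rw [Homeomorph.mul_apply, Homeomorph.subRight_apply, pr2_sub, pr2_intVec, sub_zero, hQ.isLift]
  equivariant z u := by
    simp only [Homeomorph.mul_apply, Homeomorph.subRight_apply]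
    rw [hQ.equivariant, add_sub_right_comm]
  semiconj z := by
    rw [← add_left_inj (intVec v), ← hH, Homeomorph.mul_apply, Homeomorph.subRight_apply,
      sub_add_cancel, hQ.semiconj.eq, add_assoc, sub_add_cancel]

theorem apply_ne (hQ : IsTranslationLift H q ε Q) (hε : ε ≠ 0) (z : R2) : Q z ≠ z := fun hz =>
  hε (left_eq_add.1 ((congrArg H hz).symm.trans (hQ.semiconj z)))

end IsTranslationLift

theorem IsotopicToId.exists_isTranslationLift {H : R2 → R2} {h q : T2 → T2} {c : R2}
    (hq : IsotopicToId q) (hHc : Continuous H) (hHl : IsLift H h) (hHe : Equivariant H)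
    (hc : Function.Semiconj h q (· + pr2 c)) : ∃ Q, IsTranslationLift H q c Q := by
  obtain ⟨-, F, hFh, hFl, hFe⟩ := hq
  obtain ⟨F, rfl⟩ : ∃ F' : R2 ≃ₜ R2, ⇑F' = F := ⟨hFh.homeomorph F, rfl⟩
  have hpr : ∀ z, pr2 (H (F z) - H z) = pr2 c := fun z => by
    rw [pr2_sub, hHl, hHl, hFl, hc.eq, add_sub_cancel_left]
  obtain ⟨v, hv⟩ := pr2_eq_pr2_iff.1 (hpr 0)
  have hF : IsTranslationLift H q (c + intVec v) F := ⟨hFl, hFe, fun z => by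
    rw [← hv, ← apply_eq_apply_of_pr2_comp_eq (by fun_prop) hpr z 0]
    exact (add_sub_cancel _ _).symm⟩
  exact ⟨_, add_sub_cancel_right c (intVec v) ▸ hF.sub_intVec hHe v⟩

end Semiconj

/-! ### The rotation vector -/

section RotationVector

instance isProbabilityMeasure_volume_T2 : IsProbabilityMeasure (volume : Measure T2) := by
  have : IsProbabilityMeasure (volume : Measure (AddCircle (1 : ℝ))) :=
    ⟨UnitAddCircle.measure_univ⟩
  rw [Measure.volume_eq_prod]
  infer_instance

theorem integrable_of_continuous {X E : Type*} [TopologicalSpace X] [CompactSpace X]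
    [MeasurableSpace X] [OpensMeasurableSpace X] [NormedAddCommGroup E]
    [SecondCountableTopologyEither X E] {μ : Measure X} [IsFiniteMeasureOnCompacts μ] {Φ : X → E}
    (hΦ : Continuous Φ) : Integrable Φ μ :=
  hΦ.integrable_of_hasCompactSupport (HasCompactSupport.of_compactSpace Φ)

theorem integral_comp_eq_of_measurePreserving {α β E : Type*} [MeasurableSpace α]
    [MeasurableSpace β] [NormedAddCommGroup E] [NormedSpace ℝ E] {μ : Measure α} {ν : Measure β}
    {g : α → β} (hg : MeasurePreserving g μ ν) {Φ : β → E} (hΦ : AEStronglyMeasurable Φ ν) :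
    ∫ x, Φ (g x) ∂μ = ∫ y, Φ y ∂ν := by
  rw [← hg.map_eq, integral_map hg.aemeasurable (hg.map_eq.symm ▸ hΦ)]

theorem continuous_of_comp_pr2_eq {G : R2 → R2} (hG : Continuous G) {Φ : T2 → R2}
    (hΦ : ∀ z, Φ (pr2 z) = G z - z) : Continuous Φ :=
  isQuotientMap_pr2.continuous_iff.2 ((hG.sub continuous_id).congr fun z => (hΦ z).symm)

theorem IsotopicToId.exists_isRotOf {g : T2 → T2} (hg : IsotopicToId g) : ∃ u, IsRotOf g u := by
  obtain ⟨-, G, hGh, hGl, hGe⟩ := hg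
  obtain ⟨Φ, hΦ⟩ := hGe.exists_displacement hGh.continuous
  exact ⟨_, G, Φ, hGh.continuous, hGl, hGe, hΦ, rfl⟩

namespace IsRotOf

variable {g g' h : T2 → T2} {u u' d : T2}

theorem comp (hg : IsRotOf g u) (hg' : IsRotOf g' u') (hmp : MeasurePreserving g' volume volume) :
    IsRotOf (g ∘ g') (u + u') := by
  obtain ⟨G, Φ, hGc, hGl, hGe, hΦ, rfl⟩ := hg
  obtain ⟨G', Φ', hGc', hGl', hGe', hΦ', rfl⟩ := hg'
  have hΦc := continuous_of_comp_pr2_eq hGc hΦ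
  have hΦc' := continuous_of_comp_pr2_eq hGc' hΦ'
  refine ⟨G ∘ G', fun x => Φ (g' x) + Φ' x, hGc.comp hGc', hGl.comp hGl', hGe.comp hGe',
    fun z => ?_, ?_⟩
  · beta_reduce
    rw [← hGl', hΦ, hΦ', Function.comp_apply, sub_add_sub_cancel]
  · have hΦg : Integrable fun x => Φ (g' x) :=
      integrable_of_continuous (hΦc.comp (hGl'.continuous hGc'))
    rw [integral_add hΦg (integrable_of_continuous hΦc'), pr2_add,
      integral_comp_eq_of_measurePreserving hmp hΦc.aestronglyMeasurable]

-- `G - id` is cohomologous to the constant `H ∘ G - H`, with transfer function `H - id`.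
theorem eq_of_semiconj (hg : IsRotOf g u) (hmp : MeasurePreserving g volume volume)
    (hh : HomotopicToIdMap h) (hd : Function.Semiconj h g (· + d)) : u = d := by
  obtain ⟨G, Φ, hGc, hGl, -, hΦ, rfl⟩ := hg
  obtain ⟨H, hHc, hHl, hHe⟩ := hh
  obtain ⟨Ψ, hΨ⟩ := hHe.exists_displacement hHc
  have hpr : ∀ z, pr2 (H (G z) - H z) = d := fun z => by
    rw [pr2_sub, hHl, hHl, hGl, hd.eq, add_sub_cancel_left]
  have hcohom : ∀ x, Φ x = H (G 0) - H 0 + (Ψ x - Ψ (g x)) := fun x => by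
    obtain ⟨z, rfl⟩ := surjective_pr2 x
    rw [hΦ, ← hGl, hΨ, hΨ, ← apply_eq_apply_of_pr2_comp_eq (by fun_prop) hpr z 0]
    abel
  have hΨi : Integrable Ψ := integrable_of_continuous Ψ.continuous
  have hΨgi : Integrable fun x => Ψ (g x) :=
    integrable_of_continuous (Ψ.continuous.comp (hGl.continuous hGc))
  have hintegral : ∫ x, Φ x = H (G 0) - H 0 := by
    have hdiff : Integrable fun x => Ψ x - Ψ (g x) := hΨi.sub hΨgi
    simp_rw [hcohom]
    rw [integral_add (integrable_const _) hdiff, integral_sub hΨi hΨgi,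
      integral_comp_eq_of_measurePreserving hmp hΨi.aestronglyMeasurable, sub_self, add_zero,
      integral_const, probReal_univ, one_smul]
  rw [hintegral, hpr]

end IsRotOf

end RotationVector

/-! ### Visits to a free ball -/

section Visits

open Classical in
theorem natCast_mul_measure_le_of_card_visits_le {α : Type*} [MeasurableSpace α] {μ : Measure α}
    {q : α → α} (hq : MeasurePreserving q μ μ) {S : Set α} (hS : MeasurableSet S) {N C : ℕ}
    (hC : ∀ p, {i ∈ Finset.range N | q^[i] p ∈ S}.card ≤ C) : N * μ S ≤ C * μ Set.univ := by
  have hSi : ∀ i, MeasurableSet (q^[i] ⁻¹' S) := fun i => (hq.iterate i).measurable hS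
  calc N * μ S = ∑ i ∈ Finset.range N, μ (q^[i] ⁻¹' S) := by
        simp only [(hq.iterate _).measure_preimage hS.nullMeasurableSet, Finset.sum_const,
          Finset.card_range, nsmul_eq_mul]
    _ = ∫⁻ p, ∑ i ∈ Finset.range N, (q^[i] ⁻¹' S).indicator 1 p ∂μ := by
        simp only [lintegral_finsetSum _ fun i _ => measurable_one.indicator (hSi i),
          lintegral_indicator_one (hSi _)]
    _ ≤ ∫⁻ _, C ∂μ := lintegral_mono fun p => by
        simp only [Set.indicator_apply, Set.mem_preimage, Pi.one_apply, Finset.sum_boole]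
        exact mod_cast hC p
    _ = C * μ Set.univ := lintegral_const _

theorem measurePreserving_pr2 (a : R2) :
    MeasurePreserving pr2 (volume.restrict (Set.Ioc a.1 (a.1 + 1) ×ˢ Set.Ioc a.2 (a.2 + 1)))
      volume := by
  rw [Measure.volume_eq_prod, Measure.volume_eq_prod, ← Measure.prod_restrict]
  exact (UnitAddCircle.measurePreserving_mk a.1).prod (UnitAddCircle.measurePreserving_mk a.2)

theorem ofReal_sq_le_volume_image_pr2_ball (x : R2) {ρ : ℝ} (hρ0 : 0 ≤ ρ) (hρ : ρ ≤ 1 / 2) :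
    ENNReal.ofReal ((2 * ρ) ^ 2) ≤ volume (pr2 '' Metric.ball x ρ) := by
  have hmeas : MeasurableSet (pr2 '' Metric.ball x ρ) :=
    (isOpenMap_pr2 _ Metric.isOpen_ball).measurableSet
  have hbox : Metric.ball x ρ ⊆
      Set.Ioc (x.1 - 1 / 2) (x.1 - 1 / 2 + 1) ×ˢ Set.Ioc (x.2 - 1 / 2) (x.2 - 1 / 2 + 1) := by
    rw [← ball_prod_same, Real.ball_eq_Ioo, Real.ball_eq_Ioo]
    refine Set.prod_mono ?_ ?_ <;>
      exact Set.Ioo_subset_Ioc_self.trans (Set.Ioc_subset_Ioc (by linarith) (by linarith))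
  calc ENNReal.ofReal ((2 * ρ) ^ 2) = volume (Metric.ball x ρ) := by
        rw [← ball_prod_same, Measure.volume_eq_prod, Measure.prod_prod, Real.volume_ball,
          Real.volume_ball, ← ENNReal.ofReal_mul (by positivity), sq]
    _ = volume.restrict _ (Metric.ball x ρ) := (Measure.restrict_eq_self _ hbox).symm
    _ ≤ volume.restrict _ (pr2 ⁻¹' (pr2 '' Metric.ball x ρ)) :=
        measure_mono (Set.subset_preimage_image _ _)
    _ = volume (pr2 '' Metric.ball x ρ) :=
        (measurePreserving_pr2 (x - (1 / 2, 1 / 2))).measure_preimage hmeas.nullMeasurableSet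

theorem mem_Icc_of_norm_intVec_le {v : ℤ × ℤ} {m : ℕ} (hv : ‖intVec v‖ ≤ m) :
    v ∈ Finset.Icc (-m : ℤ × ℤ) m := by
  simp only [Prod.norm_def, intVec, Real.norm_eq_abs, max_le_iff, abs_le] at hv
  rw [Finset.mem_Icc]
  exact ⟨⟨mod_cast hv.1.1, mod_cast hv.2.1⟩, ⟨mod_cast hv.1.2, mod_cast hv.2.2⟩⟩

theorem card_Icc_neg_natCast (m : ℕ) : (Finset.Icc (-m : ℤ × ℤ) m).card = (2 * m + 1) ^ 2 := by
  have hcard : (Finset.Icc (-m : ℤ) m).card = 2 * m + 1 := by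
    rw [Int.card_Icc]
    lia
  rw [sq, ← hcard]
  exact Finset.card_Icc_prod _ _

theorem norm_apply_sub_self_le {E : Type*} [SeminormedAddCommGroup E] {H φ : E → E} {ε : E} {κ : ℝ}
    (hH : ∀ z, ‖H z - z‖ ≤ κ) (hφ : Function.Semiconj H φ (· + ε)) (z : E) :
    ‖φ z - z‖ ≤ 2 * κ + ‖ε‖ :=
  calc ‖φ z - z‖ = ‖(H z - z) - (H (φ z) - φ z) + ε‖ := by
        rw [hφ.eq]
        congr 1
        abel
    _ ≤ ‖H z - z‖ + ‖H (φ z) - φ z‖ + ‖ε‖ :=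
        (norm_add_le _ _).trans (by gcongr; exact norm_sub_le _ _)
    _ ≤ 2 * κ + ‖ε‖ := by linarith [hH z, hH (φ z)]

namespace IsTranslationLift

variable {H : R2 → R2} {q : T2 → T2} {ε : R2} {Q : R2 ≃ₜ R2}

theorem eq_of_iterate_add_intVec_mem (hQ : IsTranslationLift H q ε Q) (hε : ε ≠ 0) {U : Set R2}
    (hUo : IsOpen U) (hUp : IsPreconnected U) (hU : IsFree Q U) {z : R2} {v : ℤ × ℤ} {i j : ℕ}
    (hi : Q^[i] z + intVec v ∈ U) (hj : Q^[j] z + intVec v ∈ U) : i = j := by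
  wlog hij : i < j generalizing i j
  · rcases (not_lt.1 hij).eq_or_lt with h | h
    exacts [h.symm, (this hj hi h).symm]
  obtain ⟨K, hK⟩ := hQ.equivariant.exists_norm_sub_le Q.continuous
  refine (iterate_notMem_of_isFree_of_norm_sub_le hK (hQ.apply_ne hε) hUo hUp hU hi
    (Nat.sub_pos_of_lt hij) ?_).elim
  rwa [hQ.equivariant.iterate, ← Function.iterate_add_apply, Nat.sub_add_cancel hij.le]

open Classical in
-- A visit at time `i` singles out a deck transformation; these are distinct by
-- Brouwer's lemma, and bounded because the orbit drifts by at most `N * ‖ε‖`.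
theorem card_visits_le (hQ : IsTranslationLift H q ε Q) (hε : ε ≠ 0) {κ : ℝ}
    (hH : ∀ z, ‖H z - z‖ ≤ κ) {m : ℕ} (hm : 2 * κ + 3 ≤ m) {U : Set R2} (hUo : IsOpen U)
    (hUp : IsPreconnected U) (hU : IsFree Q U) {x : R2} (hUx : U ⊆ Metric.closedBall x 1) {N : ℕ}
    (hN : N * ‖ε‖ ≤ 1) (p : T2) :
    {i ∈ Finset.range N | q^[i] p ∈ pr2 '' U}.card ≤ (2 * m + 1) ^ 2 := by
  obtain ⟨z, rfl, hz⟩ := exists_pr2_eq_norm_sub_le p x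
  have hdeck : ∀ i, q^[i] (pr2 z) ∈ pr2 '' U → ∃ v, Q^[i] z + intVec v ∈ U := by
    rintro i ⟨y, hy, hyi⟩
    rw [← hQ.isLift.iterate i z] at hyi
    obtain ⟨v, rfl⟩ := pr2_eq_pr2_iff.1 hyi
    exact ⟨v, hy⟩
  choose! V hV using hdeck
  rw [← card_Icc_neg_natCast]
  refine Finset.card_le_card_of_injOn V (fun i hi => mem_Icc_of_norm_intVec_le ?_)
    fun i hi j hj hij => ?_
  · obtain ⟨hiN, hi⟩ := Finset.mem_filter.1 (Finset.mem_coe.1 hi)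
    have hdrift : ‖i • ε‖ ≤ 1 := (norm_nsmul_le ..).trans <| hN.trans' <| by
      gcongr
      exact (Finset.mem_range.1 hiN).le
    have hQi := norm_apply_sub_self_le hH (semiconj_iterate_add hQ.semiconj i) z
    have hx := mem_closedBall_iff_norm.1 (hUx (hV i hi))
    calc ‖intVec (V i)‖ = ‖(Q^[i] z + intVec (V i) - x) - (Q^[i] z - z) - (z - x)‖ := by
          congr 1
          abel
      _ ≤ ‖Q^[i] z + intVec (V i) - x‖ + ‖Q^[i] z - z‖ + ‖z - x‖ :=
          (norm_sub_le _ _).trans (by gcongr; exact norm_sub_le _ _)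
      _ ≤ m := by linarith
  · have hi := hV i (Finset.mem_filter.1 (Finset.mem_coe.1 hi)).2
    have hj := hV j (Finset.mem_filter.1 (Finset.mem_coe.1 hj)).2
    exact hQ.eq_of_iterate_add_intVec_mem hε hUo hUp hU hi (hij ▸ hj)

theorem sq_le_mul_norm_of_isFree_ball (hQ : IsTranslationLift H q ε Q) (hε : ε ≠ 0)
    (hε1 : ‖ε‖ ≤ 1) (hq : MeasurePreserving q volume volume) {κ : ℝ} (hH : ∀ z, ‖H z - z‖ ≤ κ)
    {m : ℕ} (hm : 2 * κ + 3 ≤ m) {x : R2} {ρ : ℝ} (hρ0 : 0 ≤ ρ) (hρ : ρ ≤ 1 / 2)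
    (hfree : IsFree Q (Metric.ball x ρ)) : 2 * ρ ^ 2 ≤ (2 * m + 1) ^ 2 * ‖ε‖ := by
  have hε0 : 0 < ‖ε‖ := norm_pos_iff.2 hε
  set N := ⌊1 / ‖ε‖⌋₊
  have hN : N * ‖ε‖ ≤ 1 := (le_div_iff₀ hε0).1 (Nat.floor_le (by positivity))
  have hN' : 1 / ‖ε‖ / 2 ≤ N := (Nat.div_two_lt_floor ((one_le_div₀ hε0).2 hε1)).le
  have hmeasure : N * volume (pr2 '' Metric.ball x ρ) ≤ ((2 * m + 1) ^ 2 : ℕ) * volume Set.univ :=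
    natCast_mul_measure_le_of_card_visits_le hq
      (isOpenMap_pr2 _ Metric.isOpen_ball).measurableSet <|
      hQ.card_visits_le hε hH hm Metric.isOpen_ball (convex_ball x ρ).isPreconnected hfree
        (Metric.ball_subset_closedBall.trans (Metric.closedBall_subset_closedBall (by linarith))) hN
  have hcount : N * (2 * ρ) ^ 2 ≤ (2 * m + 1 : ℝ) ^ 2 := by
    rw [measure_univ, mul_one] at hmeasure
    have := (mul_le_mul_right (ofReal_sq_le_volume_image_pr2_ball x hρ0 hρ) _).trans hmeasure
    rw [← ENNReal.ofReal_natCast, ← ENNReal.ofReal_natCast, ← ENNReal.ofReal_mul N.cast_nonneg,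
      ENNReal.ofReal_le_ofReal_iff (by positivity)] at this
    exact mod_cast this
  calc 2 * ρ ^ 2 = 1 / ‖ε‖ / 2 * (2 * ρ) ^ 2 * ‖ε‖ := by field
    _ ≤ N * (2 * ρ) ^ 2 * ‖ε‖ := by gcongr
    _ ≤ (2 * m + 1) ^ 2 * ‖ε‖ := by gcongr

end IsTranslationLift

end Visits

/-! ### Rigidity -/

section Rigidity

theorem norm_le_enorm2 (v : R2) : ‖v‖ ≤ enorm2 v :=
  max_le (Real.abs_le_sqrt (le_add_of_nonneg_right (sq_nonneg v.2)))
    (Real.abs_le_sqrt (le_add_of_nonneg_left (sq_nonneg v.1)))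

theorem SuperLiouville.exists_pow_mul_norm_le {ω : R2} (hω : SuperLiouville ω) {B δ : ℝ}
    (hB : 1 ≤ B) (hδ : 0 < δ) :
    ∃ n : ℕ, n ≠ 0 ∧ ∃ v, B ^ n * ‖n • ω - intVec v‖ ≤ δ := by
  set a := min δ 1 / B
  have hB0 : 0 < B := one_pos.trans_le hB
  have ha0 : 0 < a := by positivity
  have ha1 : a ≤ 1 := (div_le_one hB0).2 ((min_le_right _ _).trans hB)
  obtain ⟨n, hn, hn1⟩ := ((hω (Real.log a)).and_eventually (eventually_ge_atTop 1)).exists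
  rw [inv_mul_lt_iff₀ (mod_cast hn1), ← Real.log_pow] at hn
  -- `Real.log 0 = 0` is not below `Real.log (a ^ n) ≤ 0`, so `n • ω` is not an integer vector.
  have hpos : 0 < normT2 ((n : ℝ) • ω) := by
    have hnonneg : 0 ≤ normT2 ((n : ℝ) • ω) := Real.iInf_nonneg fun v => Real.sqrt_nonneg _
    refine hnonneg.lt_of_ne' fun h => hn.not_ge ?_
    rw [h, Real.log_zero]
    exact Real.log_nonpos (by positivity) (pow_le_one₀ ha0.le ha1)
  obtain ⟨v, hv⟩ := exists_lt_of_ciInf_lt ((Real.log_lt_log_iff hpos (by positivity)).1 hn)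
  refine ⟨n, Nat.one_le_iff_ne_zero.1 hn1, v, ?_⟩
  rw [Nat.cast_smul_eq_nsmul] at hv
  calc B ^ n * ‖n • ω - intVec v‖ ≤ B ^ n * a ^ n := by
        gcongr
        exact (norm_le_enorm2 _).trans hv.le
    _ = min δ 1 ^ n := by rw [← mul_pow, mul_div_cancel₀ _ hB0.ne']
    _ ≤ min δ 1 := pow_le_of_le_one (by positivity) (min_le_right _ _) (by lia)
    _ ≤ δ := min_le_left _ _

theorem isFree_ball {X : Type*} [PseudoMetricSpace X] {Q : X → X} {x : X} {ρ η : ℝ}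
    (hQ : ∀ y ∈ Metric.ball x ρ, dist (Q y) (Q x) < η) (hx : ρ + η ≤ dist (Q x) x) :
    IsFree Q (Metric.ball x ρ) := fun y hy hQy => by
  have := dist_triangle_left (Q x) x (Q y)
  linarith [hQ y hy, Metric.mem_ball.1 hQy]

namespace IsTranslationLift

variable {H : R2 → R2} {f g p : T2 → T2} {ε ω : R2} {F G P : R2 ≃ₜ R2}

theorem dist_apply_apply_lt (hP : IsTranslationLift H p ε P) (hG : IsTranslationLift H g 0 G)
    (hε : ε ≠ 0) (hp : MeasurePreserving p volume volume) (hg : MeasurePreserving g volume volume)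
    {κ : ℝ} (hH : ∀ z, ‖H z - z‖ ≤ κ) {m : ℕ} (hm : 2 * κ + 3 ≤ m) {K : NNReal} (hK1 : 1 ≤ K)
    (hK : LipschitzWith K P) {γ η : ℝ} (hγ0 : 0 < γ) (hγ : γ ≤ 1 / 2) (hγη : γ ≤ η)
    (hGγ : ∀ a b, dist a b < γ → dist (G a) (G b) < η)
    (hεK : (2 * m + 1) ^ 2 * (K ^ 2 * ‖ε‖) < 2 * γ ^ 2) (x : R2) : dist (G (P x)) x < 2 * η := by
  by_contra! hfar
  have hK1' : (1 : ℝ) ≤ K := mod_cast hK1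
  have hK0 : (0 : ℝ) < K := one_pos.trans_le hK1'
  have hργ : γ / K ≤ γ := div_le_self hγ0.le hK1'
  have hε1 : ‖ε‖ ≤ 1 := by
    calc ‖ε‖ ≤ K ^ 2 * ‖ε‖ := le_mul_of_one_le_left (norm_nonneg _) (one_le_pow₀ hK1')
      _ ≤ (2 * m + 1) ^ 2 * (K ^ 2 * ‖ε‖) :=
          le_mul_of_one_le_left (by positivity) (one_le_pow₀ (by linarith [m.cast_nonneg (α := ℝ)]))
      _ ≤ 2 * (1 / 2) ^ 2 := hεK.le.trans (by gcongr)
      _ ≤ 1 := by norm_num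
  have hfree : IsFree (G * P) (Metric.ball x (γ / K)) := by
    refine isFree_ball (η := η) (fun y hy => hGγ _ _ ?_) (by rw [Homeomorph.mul_apply]; linarith)
    calc dist (P y) (P x) ≤ K * dist y x := hK.dist_le_mul _ _
      _ < K * (γ / K) := by gcongr; exact hy
      _ = γ := mul_div_cancel₀ _ hK0.ne'
  refine hεK.not_ge ?_
  have hGP : IsTranslationLift H (g ∘ p) ε (G * P) := by simpa only [add_zero] using hG.mul hP
  calc 2 * γ ^ 2 = K ^ 2 * (2 * (γ / K) ^ 2) := by field
    _ ≤ K ^ 2 * ((2 * m + 1) ^ 2 * ‖ε‖) := mul_le_mul_of_nonneg_left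
        (hGP.sq_le_mul_norm_of_isFree_ball hε hε1 (hg.comp hp) hH hm (by positivity)
          (hργ.trans hγ) hfree) (by positivity)
    _ = (2 * m + 1) ^ 2 * (K ^ 2 * ‖ε‖) := by ring

theorem exists_lipschitzWith_mul_norm_le (hF : IsTranslationLift H f ω F) (hHe : Equivariant H)
    (hf : MeasurePreserving f volume volume) {L : NNReal} (hL : LipschitzWith L F)
    (hω : SuperLiouville ω) (hω0 : ∀ n : ℕ, n ≠ 0 → n • pr2 ω ≠ 0) {δ : ℝ} (hδ : 0 < δ) :
    ∃ (p : T2 → T2) (ε : R2) (P : R2 ≃ₜ R2) (K : NNReal), MeasurePreserving p volume volume ∧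
      IsTranslationLift H p ε P ∧ ε ≠ 0 ∧ 1 ≤ K ∧ LipschitzWith K P ∧ K ^ 2 * ‖ε‖ ≤ δ := by
  wlog hL1 : 1 ≤ L generalizing L
  · exact this (hL.weaken (le_max_right 1 L)) (le_max_left _ _)
  obtain ⟨n, hn, v, hv⟩ := hω.exists_pow_mul_norm_le (B := L ^ 2) (one_le_pow₀ (mod_cast hL1)) hδ
  refine ⟨f^[n], n • ω - intVec v, Homeomorph.subRight (intVec v) * F ^ n, L ^ n, hf.iterate n,
    (hF.pow n).sub_intVec hHe v, fun h => ?_, one_le_pow₀ hL1, ?_, ?_⟩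
  · exact hω0 n hn (pr2_eq_zero_iff.2 ⟨v, (sub_eq_zero.1 h).symm⟩)
  · have hsub : LipschitzWith 1 (Homeomorph.subRight (intVec v)) :=
      (IsometryEquiv.subRight (intVec v)).isometry.lipschitz
    rw [← one_mul (L ^ n)]
    exact hsub.comp (homeomorph_coe_pow F n ▸ hL.iterate n)
  · rwa [NNReal.coe_pow, ← pow_mul, mul_comm n, pow_mul]

theorem apply_eq_self (hF : IsTranslationLift H f ω F) (hG : IsTranslationLift H g 0 G)
    (hHc : Continuous H) (hHe : Equivariant H) (hf : MeasurePreserving f volume volume)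
    (hg : MeasurePreserving g volume volume) {L : NNReal} (hL : LipschitzWith L F)
    (hω : SuperLiouville ω) (hω0 : ∀ n : ℕ, n ≠ 0 → n • pr2 ω ≠ 0) (x : R2) : G x = x := by
  obtain ⟨κ, hκ⟩ := hHe.exists_norm_sub_le hHc
  obtain ⟨m, hm⟩ := exists_nat_ge (2 * κ + 3)
  refine eq_of_forall_dist_le fun η hη => ?_
  obtain ⟨γ₀, hγ₀, hGγ₀⟩ :=
    Metric.uniformContinuous_iff.1 (hG.equivariant.uniformContinuous G.continuous) (η / 4)
      (by positivity)
  obtain ⟨γ, hγ0, hγ⟩ : ∃ γ > 0, γ < min γ₀ (min (1 / 2) (η / 4)) := exists_between (by positivity)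
  simp only [lt_min_iff] at hγ
  obtain ⟨p, ε, P, K, hp, hP, hε, hK1, hK, hεK⟩ := hF.exists_lipschitzWith_mul_norm_le hHe hf hL hω
    hω0 (show 0 < γ ^ 2 / (2 * m + 1) ^ 2 by positivity)
  have hεK' : (2 * m + 1) ^ 2 * (K ^ 2 * ‖ε‖) < 2 * γ ^ 2 := by
    rw [le_div_iff₀' (by positivity)] at hεK
    linarith [pow_pos hγ0 2]
  have hone : IsTranslationLift H id 0 1 := by simpa using hP.pow 0
  obtain ⟨y, rfl⟩ := P.surjective x
  have hGPy : dist (G (P y)) y < 2 * (η / 4) :=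
    hP.dist_apply_apply_lt hG hε hp hg hκ hm hK1 hK hγ0 hγ.2.1.le hγ.2.2.le
      (fun a b hab => hGγ₀ (hab.trans hγ.1)) hεK' y
  have hPy : dist (P y) y < 2 * (η / 4) :=
    hP.dist_apply_apply_lt hone hε hp (.id _) hκ hm hK1 hK hγ0 hγ.2.1.le hγ.2.2.le
      (fun a b hab => hab.trans hγ.2.2) hεK' y
  linarith [dist_triangle_right (G (P y)) (P y) y]

end IsTranslationLift

section Torus

variable {f h : T2 → T2} {ω : R2}

theorem eq_id_of_comp_eq (hf : IsotopicToId f) (hfd : IsCrDiffeo 1 f)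
    (hfm : MeasurePreserving f volume volume) (hω : SuperLiouville ω) (hh : HomotopicToIdMap h)
    (hhf : Function.Semiconj h f (· + pr2 ω)) (hω0 : ∀ n : ℕ, n ≠ 0 → n • pr2 ω ≠ 0) {q : T2 → T2}
    (hq : IsotopicToId q) (hqm : MeasurePreserving q volume volume) (hhq : h ∘ q = h) : q = id := by
  obtain ⟨H, hHc, hHl, hHe⟩ := hh
  obtain ⟨F, hF⟩ := hf.exists_isTranslationLift hHc hHl hHe hhf
  obtain ⟨L, hL⟩ := hfd.exists_lipschitzWith F.continuous hF.isLift hF.equivariant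
  obtain ⟨G, hG⟩ := hq.exists_isTranslationLift (c := 0) hHc hHl hHe
    fun x => (congrFun hhq x).trans (add_zero (h x)).symm
  refine funext fun x => ?_
  obtain ⟨z, rfl⟩ := surjective_pr2 x
  rw [← hG.isLift, hF.apply_eq_self hG hHc hHe hfm hqm hL hω hω0, id]

theorem eq_of_comp_eq_comp (hf : IsotopicToId f) (hfd : IsCrDiffeo 1 f)
    (hfm : MeasurePreserving f volume volume) (hω : SuperLiouville ω) (hh : HomotopicToIdMap h)
    (hhf : Function.Semiconj h f (· + pr2 ω)) (hω0 : ∀ n : ℕ, n ≠ 0 → n • pr2 ω ≠ 0)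
    {g g' : T2 → T2} (hg : IsotopicToId g) (hg' : IsotopicToId g')
    (hgm : MeasurePreserving g volume volume) (hgm' : MeasurePreserving g' volume volume)
    (hgg' : h ∘ g = h ∘ g') : g = g' := by
  obtain ⟨e, rfl⟩ : ∃ e : T2 ≃ₜ T2, ⇑e = g' := ⟨hg'.1.homeomorph g', rfl⟩
  have hem : MeasurePreserving e.symm volume volume :=
    MeasurePreserving.symm e.toMeasurableEquiv hgm'
  have hh' : h ∘ (g ∘ e.symm) = h := by
    rw [← Function.comp_assoc, hgg', Function.comp_assoc, e.self_comp_symm, Function.comp_id]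
  have hid : g ∘ e.symm = id :=
    eq_id_of_comp_eq hf hfd hfm hω hh hhf hω0 (hg.comp hg'.symm) (hgm.comp hem) hh'
  exact (e.comp_symm_eq id g).1 hid

end Torus

end Rigidity

theorem phi1_phi2_injective_general
    (r s : ℕ∞) (hr : 1 ≤ r) (hs : s ≤ r)
    (f : T2 → T2) (ω : R2) (w : T2)
    (hw : pr2 ω = w)
    (hsl : SuperLiouville ω)
    (hiso : IsotopicToId f)
    (hcr : IsCrDiffeo r f)
    (hmp : MeasurePreserving f (volume : Measure T2) volume)
    (hsc : RegSemiConj f w)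
    (x0 : T2) (hx0 : Dense (Set.range fun n : ℕ => f^[n] x0))
    (GF : Set C(T2, T2))
    (hGF : GF = {g : C(T2, T2) | IsCrDiffeo s ⇑g ∧ IsotopicToId ⇑g ∧
      MeasurePreserving ⇑g (volume : Measure T2) volume ∧ ⇑g ∘ f = f ∘ ⇑g}) :
    (∀ g1 ∈ GF, ∀ g2 ∈ GF, ∀ u : T2, IsRotOf ⇑g1 u → IsRotOf ⇑g2 u → g1 = g2) ∧
    (∀ g1 ∈ GF, ∀ g2 ∈ GF, ∀ u1 u2 : T2, IsRotOf ⇑g1 u1 → IsRotOf ⇑g2 u2 →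
      IsRotOf (⇑g1 ∘ ⇑g2) (u1 + u2)) ∧
    Dense {u : T2 | ∃ g ∈ GF, IsRotOf ⇑g u} ∧
    (∀ g1 ∈ GF, ∀ g2 ∈ GF, g1 x0 = g2 x0 → g1 = g2) := by
  subst hw hGF
  obtain ⟨h, hhc, hhs, hh, hhf⟩ := hsc
  have hdense : DenseRange fun n : ℕ => n • pr2 ω := denseRange_nsmul_of_semiconj hx0 hhc hhs hhf
  refine ⟨?_, ?_, ?_, ?_⟩
  · rintro g ⟨-, hg, hgm, hgf⟩ g' ⟨-, hg', hgm', hgf'⟩ u hu hu'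
    have hgu := semiconj_add_of_commute hx0 g.continuous hhc (congrFun hgf) hhf
    have hgu' := semiconj_add_of_commute hx0 g'.continuous hhc (congrFun hgf') hhf
    rw [← hu.eq_of_semiconj hgm hh hgu] at hgu
    rw [← hu'.eq_of_semiconj hgm' hh hgu'] at hgu'
    exact DFunLike.coe_injective <| eq_of_comp_eq_comp hiso (hcr.of_le hr) hmp hsl hh hhf
      (fun n => nsmul_ne_zero_of_denseRange hdense) hg hg' hgm hgm'
      (hgu.comp_eq.trans hgu'.comp_eq.symm)
  · rintro g - g' ⟨-, -, hgm', -⟩ u u' hu hu'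
    exact hu.comp hu' hgm'
  · refine hdense.mono (Set.range_subset_iff.2 fun n => ⟨⟨f^[n], hiso.1.continuous.iterate n⟩,
      ⟨(hcr.of_le hs).iterate n, hiso.iterate n, hmp.iterate n, ?_⟩, ?_⟩)
    · exact (Function.Commute.iterate_self f n).comp_eq
    · obtain ⟨u, hu⟩ := (hiso.iterate n).exists_isRotOf
      exact hu.eq_of_semiconj (hmp.iterate n) hh (semiconj_iterate_add hhf n) ▸ hu
  · rintro g ⟨-, -, -, hgf⟩ g' ⟨-, -, -, hgf'⟩ hgg'
    exact DFunLike.coe_injective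
      (eq_of_commute_of_apply_eq hx0 g.continuous g'.continuous (congrFun hgf) (congrFun hgf') hgg')

/-- **Section 5.1.** In the setting of Theorem 1.4, both φ₁ : G_f → ℝ²/ℤ², g ↦ ρ(g), and
φ₂ : G_f → 𝕋², g ↦ g(x₀) (for x₀ with dense f-orbit) are injective; moreover φ₁ is a group
homomorphism with dense image. -/
theorem phi1_phi2_injective
    (r : ℕ∞) (hr : 2 ≤ r)
    (f : T2 → T2) (ω : R2) (w : T2)
    (hw : pr2 ω = w)
    (hti : TotallyIrrationalVec ω)
    (hsl : SuperLiouville ω)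
    (hiso : IsotopicToId f)
    (hcr : IsCrDiffeo r f)
    (hmp : MeasurePreserving f (volume : Measure T2) volume)
    (hsc : RegSemiConj f w)
    (x0 : T2) (hx0 : Dense (Set.range fun n : ℕ => f^[n] x0))
    (GF : Set C(T2, T2))
    (hGF : GF = {g : C(T2, T2) | IsCrDiffeo (r - 1) ⇑g ∧ IsotopicToId ⇑g ∧
      MeasurePreserving ⇑g (volume : Measure T2) volume ∧ ⇑g ∘ f = f ∘ ⇑g}) :
    (∀ g1 ∈ GF, ∀ g2 ∈ GF, ∀ u : T2, IsRotOf ⇑g1 u → IsRotOf ⇑g2 u → g1 = g2) ∧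
    (∀ g1 ∈ GF, ∀ g2 ∈ GF, ∀ u1 u2 : T2, IsRotOf ⇑g1 u1 → IsRotOf ⇑g2 u2 →
      IsRotOf (⇑g1 ∘ ⇑g2) (u1 + u2)) ∧
    Dense {u : T2 | ∃ g ∈ GF, IsRotOf ⇑g u} ∧
    (∀ g1 ∈ GF, ∀ g2 ∈ GF, g1 x0 = g2 x0 → g1 = g2) := by
  exact phi1_phi2_injective_general r (r - 1) (one_le_two.trans hr) tsub_le_self f ω w hw hsl hiso
    hcr hmp hsc x0 hx0 GF hGF
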